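/- arXiv:2004.10893 — 5 statements merged into one kernel-verified Lean document; each statement's English description precedes it below -/
import Mathlib

section
/- Let G be a distance regular finite simple graph. Then for any finite simple graph H, G ≅_{DNN} H if and only if H is a distance regular graph that is cospectral to G (the adjacency matrices of G and H have the same characteristic polynomial). -/
open Matrix BigOperators

/-- `rel(g,g') = rel(h,h')`. -/
def relEq {α β : Type*} (G : SimpleGraph α) (H : SimpleGraph β)
    (g g' : α) (h h' : β) : Prop :=
  (g = g' ↔ h = h') ∧ (G.Adj g g' ↔ H.Adj h h')

/-- `M` satisfies the linear constraints of an isomorphism matrix for `G` to `H`. -/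
def IsIsoMatrix {α β : Type*} [Fintype α] [Fintype β]
    (G : SimpleGraph α) (H : SimpleGraph β)
    (M : Matrix (α × β) (α × β) ℝ) : Prop :=
  (∀ g g' : α, ∑ h : β, ∑ h' : β, M (g, h) (g', h') = 1) ∧
  (∀ h h' : β, ∑ g : α, ∑ g' : α, M (g, h) (g', h') = 1) ∧
  (∀ g g' h h', ¬ relEq G H g g' h h' → M (g, h) (g', h') = 0)

/-- `G` is distance regular: it is connected, and the number of vertices `w` at
distance `i` from `u` and distance `j` from `v` depends only on `i`, `j` and the
distance between `u` and `v`. -/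
def DistanceRegular {V : Type*} [Fintype V] (G : SimpleGraph V) : Prop :=
  G.Connected ∧ ∃ p : ℕ → ℕ → ℕ → ℕ,
    ∀ (i j : ℕ) (u v : V),
      Set.ncard {w : V | G.dist u w = i ∧ G.dist w v = j} = p i j (G.dist u v)

open Polynomial in
/-- Trace of a polynomial in a Hermitian matrix. -/
theorem trace_aeval_hermitian {n : Type*} [Fintype n] [DecidableEq n] {A : Matrix n n ℝ}
    (hA : A.IsHermitian) (q : ℝ[X]) :
    (aeval A q).trace = ∑ i, q.eval (hA.eigenvalues i) := by
  have h1 : aeval A q = Unitary.conjStarAlgAut ℝ _ hA.eigenvectorUnitary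
      (aeval (diagonal hA.eigenvalues) q) := by
    conv_lhs => rw [hA.spectral_theorem]
    exact (aeval_algHom_apply
      (Unitary.conjStarAlgAut ℝ _ hA.eigenvectorUnitary).toAlgEquiv.toAlgHom _ q)
  have h2 : aeval (diagonal hA.eigenvalues) q = diagonal (fun i => q.eval (hA.eigenvalues i)) := by
    have := (aeval_algHom_apply (Matrix.diagonalAlgHom (n := n) (α := ℝ) ℝ) hA.eigenvalues q)
    have h3 : aeval hA.eigenvalues q = fun i => q.eval (hA.eigenvalues i) := by
      ext i
      have := (aeval_algHom_apply (Pi.evalAlgHom ℝ (fun _ : n => ℝ) i) hA.eigenvalues q)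
      simpa [aeval_def, eval₂_eq_eval_map] using this.symm
    rw [h3] at this
    simpa using this
  rw [h1, h2, Unitary.conjStarAlgAut_apply, Matrix.trace_mul_comm, ← Matrix.mul_assoc]
  simp [Matrix.trace_diagonal]

open Polynomial in
theorem trace_aeval_of_charpoly {m n : Type*} [Fintype n] [DecidableEq n] [Fintype m]
    [DecidableEq m] {A : Matrix n n ℝ} {B : Matrix m m ℝ}
    (hA : A.IsHermitian) (hB : B.IsHermitian) (h : A.charpoly = B.charpoly) (q : ℝ[X]) :
    (aeval A q).trace = (aeval B q).trace := by
  rw [trace_aeval_hermitian hA, trace_aeval_hermitian hB]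
  have h1 := hA.roots_charpoly_eq_eigenvalues
  rw [h, hB.roots_charpoly_eq_eigenvalues] at h1
  have h2 := congrArg (fun s => (Multiset.map (fun x => q.eval x) s).sum) h1
  simpa using h2.symm

open Polynomial in
theorem charpoly_of_trace_aeval {m n : Type*} [Fintype n] [DecidableEq n] [Fintype m]
    [DecidableEq m] {A : Matrix n n ℝ} {B : Matrix m m ℝ}
    (hA : A.IsHermitian) (hB : B.IsHermitian)
    (h : ∀ q : ℝ[X], (aeval A q).trace = (aeval B q).trace) :
    A.charpoly = B.charpoly := by
  classical
  have key : Multiset.map hA.eigenvalues Finset.univ.val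
      = Multiset.map hB.eigenvalues Finset.univ.val := by
    ext x
    let S : Finset ℝ := insert x (Finset.univ.image hA.eigenvalues ∪ Finset.univ.image hB.eigenvalues)
    let q := Lagrange.interpolate S id (fun y => if y = x then (1 : ℝ) else 0)
    have hq : ∀ y ∈ S, q.eval y = if y = x then (1 : ℝ) else 0 := by
      intro y hy
      exact Lagrange.eval_interpolate_at_node _ (Set.injOn_id _) hy
    have h1 := h q
    rw [trace_aeval_hermitian hA, trace_aeval_hermitian hB] at h1
    rw [Finset.sum_congr rfl (fun i _ => hq _ (by simp [S])),
      Finset.sum_congr rfl (fun i _ => hq (hB.eigenvalues i) (by simp [S]))] at h1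
    rw [Finset.sum_boole, Finset.sum_boole] at h1
    have h2 := Nat.cast_injective h1
    rw [Multiset.count_map, Multiset.count_map]
    simpa [Finset.card_def, eq_comm] using h2
  rw [hA.charpoly_eq, hB.charpoly_eq]
  have := congrArg (fun s => (Multiset.map (fun x => (X - C x : ℝ[X])) s).prod) key
  simp only [Multiset.map_map] at this
  exact this

/-- The 0/1 matrix of pairs at distance `i`. -/
noncomputable def distMat {V : Type*} (G : SimpleGraph V) (i : ℕ) : Matrix V V ℝ :=
  Matrix.of fun u v => if G.dist u v = i then 1 else 0

theorem distMat_apply {V : Type*} (G : SimpleGraph V) (i : ℕ) (u v : V) :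
    distMat G i u v = if G.dist u v = i then 1 else 0 := rfl

theorem distMat_symm {V : Type*} (G : SimpleGraph V) (i : ℕ) (u v : V) :
    distMat G i u v = distMat G i v u := by
  rw [distMat_apply, distMat_apply, SimpleGraph.dist_comm]

theorem distMat_transpose {V : Type*} (G : SimpleGraph V) (i : ℕ) :
    (distMat G i)ᵀ = distMat G i := by
  ext u v
  exact distMat_symm G i v u

theorem distMat_zero {V : Type*} [DecidableEq V] (G : SimpleGraph V) (hc : G.Connected) :
    distMat G 0 = 1 := by
  ext u v
  simp [distMat_apply, Matrix.one_apply, hc.dist_eq_zero_iff]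

theorem distMat_one {V : Type*} (G : SimpleGraph V) [DecidableRel G.Adj] :
    distMat G 1 = G.adjMatrix ℝ := by
  ext u v
  simp [distMat_apply, SimpleGraph.adjMatrix_apply]

/-- The intersection number condition. -/
def HasParams {V : Type*} (G : SimpleGraph V) (p : ℕ → ℕ → ℕ → ℕ) : Prop :=
  ∀ (i j : ℕ) (u v : V),
      Set.ncard {w : V | G.dist u w = i ∧ G.dist w v = j} = p i j (G.dist u v)

theorem distMat_mul_ncard {V : Type*} [Fintype V] (G : SimpleGraph V) (i j : ℕ) (u v : V) :
    (distMat G i * distMat G j) u v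
      = (Set.ncard {w : V | G.dist u w = i ∧ G.dist w v = j} : ℝ) := by
  classical
  rw [Set.ncard_eq_toFinset_card', Matrix.mul_apply]
  simp only [distMat_apply, ← ite_and, mul_ite, mul_one, mul_zero]
  rw [Finset.sum_boole]
  congr 2
  ext w
  simp [and_comm]

theorem distMat_mul {V : Type*} [Fintype V] {G : SimpleGraph V} {p : ℕ → ℕ → ℕ → ℕ}
    (hp : HasParams G p) (i j : ℕ) (u v : V) :
    (distMat G i * distMat G j) u v = p i j (G.dist u v) := by
  rw [distMat_mul_ncard, hp]

/-- Number of pairs at distance `i`. -/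
noncomputable def pairCount {V : Type*} [Fintype V] (G : SimpleGraph V) (i : ℕ) : ℝ :=
  ∑ u, ∑ v, distMat G i u v

theorem trace_mul_distMat {V : Type*} [Fintype V] {G : SimpleGraph V} (X : Matrix V V ℝ)
    (f : ℕ → ℝ) (hX : ∀ u v, X u v = f (G.dist u v)) (k : ℕ) :
    (X * distMat G k).trace = f k * pairCount G k := by
  simp only [Matrix.trace, Matrix.diag_apply, Matrix.mul_apply, pairCount, Finset.mul_sum]
  refine Finset.sum_congr rfl fun u _ => Finset.sum_congr rfl fun v _ => ?_
  rw [distMat_symm G k v u, hX, distMat_apply]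
  split_ifs with h <;> simp [h]

theorem trace_distMat_sq {V : Type*} [Fintype V] {G : SimpleGraph V} (k : ℕ) :
    (distMat G k * distMat G k).trace = pairCount G k := by
  rw [trace_mul_distMat (distMat G k) (fun j => if j = k then 1 else 0) (fun u v => rfl)]
  simp

theorem pairCount_pos {V : Type*} [Fintype V] (G : SimpleGraph V) (u v : V) :
    0 < pairCount G (G.dist u v) := by
  have hnn : ∀ a b, 0 ≤ distMat G (G.dist u v) a b := fun a b => by
    rw [distMat_apply]; split_ifs <;> norm_num
  refine Finset.sum_pos' (fun a _ => Finset.sum_nonneg fun b _ => hnn a b) ⟨u, Finset.mem_univ _, ?_⟩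
  refine Finset.sum_pos' (fun b _ => hnn u b) ⟨v, Finset.mem_univ _, ?_⟩
  simp [distMat_apply]

theorem trace_distMat_mul3 {V : Type*} [Fintype V] {G : SimpleGraph V} {p : ℕ → ℕ → ℕ → ℕ}
    (hp : HasParams G p) (i j k : ℕ) :
    (distMat G i * distMat G j * distMat G k).trace = p i j k * pairCount G k :=
  trace_mul_distMat _ (fun k => (p i j k : ℝ)) (distMat_mul hp i j) k

/-- Between two vertices at distance `i+1`, there is a neighbour of the first one at distance `i`
from the second one. -/
theorem exists_pred {V : Type*} {G : SimpleGraph V} (hc : G.Connected) {u v : V} {i : ℕ}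
    (h : G.dist u v = i + 1) : ∃ w, G.dist u w = 1 ∧ G.dist w v = i := by
  obtain ⟨q, hq⟩ := hc.exists_walk_length_eq_dist u v
  cases q with
  | nil => simp at h
  | cons hadj q' =>
    rename_i w
    refine ⟨w, SimpleGraph.dist_eq_one_iff_adj.mpr hadj, ?_⟩
    have h1 := SimpleGraph.dist_le q'
    have h2 := hc.dist_triangle (u := u) (v := w) (w := v)
    have h3 := SimpleGraph.dist_eq_one_iff_adj.mpr hadj
    simp at hq
    omega

theorem param_pos {V : Type*} [Fintype V] {G : SimpleGraph V} (hc : G.Connected)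
    {p : ℕ → ℕ → ℕ → ℕ} (hp : HasParams G p) {u v : V} {i : ℕ}
    (h : G.dist u v = i + 1) : 0 < p 1 i (i + 1) := by
  obtain ⟨w, hw⟩ := exists_pred hc h
  have := hp 1 i u v
  rw [h] at this
  rw [← this, Set.ncard_pos]
  exact ⟨w, hw⟩

theorem param_zero {V : Type*} [Fintype V] {G : SimpleGraph V} (hc : G.Connected)
    {p : ℕ → ℕ → ℕ → ℕ} (hp : HasParams G p) {u v : V} {i : ℕ}
    (h : i + 1 < G.dist u v) : p 1 i (G.dist u v) = 0 := by
  rw [← hp 1 i u v, Set.ncard_eq_zero]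
  ext w
  simp only [Set.mem_ofPred_eq, Set.mem_empty_iff_false, iff_false]
  rintro ⟨h1, h2⟩
  have := hc.dist_triangle (u := u) (v := w) (w := v)
  omega

theorem recurrence {V : Type*} [Fintype V] {G : SimpleGraph V} (hc : G.Connected)
    {p : ℕ → ℕ → ℕ → ℕ} (hp : HasParams G p) (i : ℕ) :
    distMat G 1 * distMat G i - ∑ j ∈ Finset.range (i + 1),
      ((distMat G 1 * distMat G i * distMat G j).trace / (distMat G j * distMat G j).trace) •
        distMat G j = (p 1 i (i + 1) : ℝ) • distMat G (i + 1) := by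
  ext u v
  rw [Matrix.sub_apply, distMat_mul hp, Matrix.sum_apply]
  simp only [Matrix.smul_apply, distMat_apply, smul_eq_mul, mul_ite, mul_one, mul_zero,
    Finset.sum_ite_eq, Finset.mem_range]
  rcases lt_trichotomy (G.dist u v) (i + 1) with h | h | h
  · rw [if_pos h, if_neg h.ne, trace_distMat_mul3 hp, trace_distMat_sq,
      mul_div_cancel_right₀ _ (pairCount_pos G u v).ne', sub_self]
  · simp [h]
  · rw [if_neg (by omega), if_neg (by omega), param_zero hc hp h]
    simp

open Polynomial in
theorem sum_aeval {V : Type*} [Fintype V] [DecidableEq V] (A : Matrix V V ℝ) (k : ℝ)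
    (hk : ∀ u, ∑ v, A u v = k) (q : ℝ[X]) (u : V) : ∑ v, (aeval A q) u v = q.eval k := by
  have hk' : A *ᵥ (fun _ => 1) = k • (fun _ => (1 : ℝ)) := by
    ext u; simp [Matrix.mulVec, dotProduct, hk]
  have : ∀ q : ℝ[X], (aeval A q) *ᵥ (fun _ => 1) = q.eval k • (fun _ => (1 : ℝ)) := by
    intro q
    induction q using Polynomial.induction_on' with
    | add p q hp hq => rw [map_add, Matrix.add_mulVec, hp, hq, eval_add, add_smul]
    | monomial n a =>
      rw [aeval_monomial, eval_monomial, Algebra.commutes, mul_comm a]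
      induction n with
      | zero => ext u; simp [Matrix.mulVec, dotProduct, Matrix.algebraMap_matrix_apply]
      | succ n ih =>
        have e : A ^ (n + 1) * (algebraMap ℝ (Matrix V V ℝ)) a
            = A * (A ^ n * (algebraMap ℝ (Matrix V V ℝ)) a) := by
          rw [pow_succ', Matrix.mul_assoc]
        rw [e, ← Matrix.mulVec_mulVec, ih, Matrix.mulVec_smul, hk', smul_smul, pow_succ]
        congr 1
        ring
  have h := congrFun (this q) u
  simpa [Matrix.mulVec, dotProduct] using h

theorem row_sum {V : Type*} [Fintype V] {G : SimpleGraph V}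
    {p : ℕ → ℕ → ℕ → ℕ} (hp : HasParams G p) (u : V) :
    ∑ v, distMat G 1 u v = pairCount G 1 / Fintype.card V := by
  have h : ∀ u, ∑ v, distMat G 1 u v = p 1 1 0 := by
    intro u
    have := distMat_mul hp 1 1 u u
    rw [SimpleGraph.dist_self, Matrix.mul_apply] at this
    rw [← this]
    refine Finset.sum_congr rfl fun v _ => ?_
    rw [distMat_symm G 1 v u, distMat_apply]
    split_ifs <;> simp
  have hne : (Fintype.card V : ℝ) ≠ 0 := by
    have : Nonempty V := ⟨u⟩
    exact_mod_cast Fintype.card_ne_zero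
  rw [h, pairCount]
  simp only [h]
  rw [Finset.sum_const, Finset.card_univ, nsmul_eq_mul, mul_div_cancel_left₀ _ hne]

open Polynomial in
theorem normalize_poly {U : Type*} [Fintype U] [DecidableEq U] {K : SimpleGraph U}
    (hc : K.Connected) {r : ℕ → ℕ → ℕ → ℕ} (hr : HasParams K r) (w : ℝ[X]) (i : ℕ) (k : ℝ)
    (hw : aeval (distMat K 1) w = (r 1 i (i + 1) : ℝ) • distMat K (i + 1))
    (hkk : pairCount K 1 / Fintype.card U = k) :
    ((Fintype.card U * w.eval k) / (aeval (distMat K 1) (w * w)).trace) •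
            aeval (distMat K 1) w = distMat K (i + 1) := by
  by_cases hex : ∃ a b, K.dist a b = i + 1
  · obtain ⟨a, b, hab⟩ := hex
    have hc0 : (r 1 i (i + 1) : ℝ) ≠ 0 := by exact_mod_cast (param_pos hc hr hab).ne'
    have hT := (pairCount_pos K a b).ne'
    rw [hab] at hT
    have e1 : (Fintype.card U * w.eval k) = (r 1 i (i + 1) : ℝ) * pairCount K (i + 1) := by
      have h := fun u => sum_aeval (distMat K 1) k
        (fun u => by rw [row_sum hr, hkk]) w u
      have h2 : ∑ u, ∑ v, aeval (distMat K 1) w u v = Fintype.card U * w.eval k := by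
        simp [h]
      rw [← h2, hw, pairCount]
      simp [Finset.mul_sum]
    have e2 : (aeval (distMat K 1) (w * w)).trace
        = (r 1 i (i + 1) : ℝ) * ((r 1 i (i + 1) : ℝ) * pairCount K (i + 1)) := by
      rw [map_mul, hw, Matrix.smul_mul, Matrix.mul_smul, Matrix.trace_smul,
        Matrix.trace_smul, trace_distMat_sq]
      simp
    rw [e1, e2, hw, smul_smul]
    have : (r 1 i (i + 1) : ℝ) * pairCount K (i + 1) /
        ((r 1 i (i + 1) : ℝ) * ((r 1 i (i + 1) : ℝ) * pairCount K (i + 1))) *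
        (r 1 i (i + 1) : ℝ) = 1 := by field_simp
    rw [this, one_smul]
  · have : distMat K (i + 1) = 0 := by
      ext a b
      rw [distMat_apply, if_neg (fun h => hex ⟨a, b, h⟩)]; rfl
    rw [hw, this]; simp

open Polynomial in
/-- Cospectral distance regular graphs: the distance matrices are the same polynomials in the
adjacency matrices. -/
theorem common_poly {V W : Type*} [Fintype V] [Fintype W] [DecidableEq V] [DecidableEq W]
    {G : SimpleGraph V} {H : SimpleGraph W} (hcG : G.Connected) (hcH : H.Connected)
    {p p' : ℕ → ℕ → ℕ → ℕ} (hpG : HasParams G p) (hpH : HasParams H p')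
    (hcard : (Fintype.card V : ℝ) = Fintype.card W)
    (htr : ∀ q : ℝ[X], (aeval (distMat G 1) q).trace = (aeval (distMat H 1) q).trace) (i : ℕ) :
    ∃ q : ℝ[X], aeval (distMat G 1) q = distMat G i ∧ aeval (distMat H 1) q = distMat H i := by
  have main : ∀ i : ℕ, ∃ v : ℕ → ℝ[X], ∀ j ≤ i,
      aeval (distMat G 1) (v j) = distMat G j ∧ aeval (distMat H 1) (v j) = distMat H j := by
    intro i
    induction i with
    | zero =>
      refine ⟨fun _ => 1, fun j hj => ?_⟩
      obtain rfl : j = 0 := by omega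
      simp [distMat_zero G hcG, distMat_zero H hcH]
    | succ i ih =>
      obtain ⟨v, hv⟩ := ih
      let t : ℕ → ℝ := fun j => (aeval (distMat G 1) (X * v i * v j)).trace /
        (aeval (distMat G 1) (v j * v j)).trace
      let w : ℝ[X] := X * v i - ∑ j ∈ Finset.range (i + 1), C (t j) * v j
      have hwG : aeval (distMat G 1) w = (p 1 i (i + 1) : ℝ) • distMat G (i + 1) := by
        rw [← recurrence hcG hpG i]
        simp only [w, map_sub, map_mul, aeval_X, map_sum, aeval_C, (hv i le_rfl).1]
        congr 1
        refine Finset.sum_congr rfl fun j hj => ?_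
        have hj' : j ≤ i := by simpa [Nat.lt_succ_iff] using hj
        simp only [t, map_mul, aeval_X, (hv i le_rfl).1, (hv j hj').1]
        rw [← Algebra.smul_def]
      have hwH : aeval (distMat H 1) w = (p' 1 i (i + 1) : ℝ) • distMat H (i + 1) := by
        rw [← recurrence hcH hpH i]
        simp only [w, map_sub, map_mul, aeval_X, map_sum, aeval_C, (hv i le_rfl).2]
        congr 1
        refine Finset.sum_congr rfl fun j hj => ?_
        have hj' : j ≤ i := by simpa [Nat.lt_succ_iff] using hj
        simp only [t]
        rw [htr, htr]
        simp only [map_mul, aeval_X, (hv i le_rfl).2, (hv j hj').2]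
        rw [← Algebra.smul_def]
      have hk : pairCount G 1 = pairCount H 1 := by
        have := htr (X * X)
        simpa only [map_mul, aeval_X, trace_distMat_sq] using this
      let k : ℝ := pairCount G 1 / Fintype.card V
      let s : ℝ := (Fintype.card V * w.eval k) / (aeval (distMat G 1) (w * w)).trace
      refine ⟨Function.update v (i + 1) (C s * w), fun j hj => ?_⟩
      rcases Nat.lt_or_ge i j with h | h
      · obtain rfl : j = i + 1 := by omega
        simp only [Function.update_self, map_mul, aeval_C, ← Algebra.smul_def]
        refine ⟨normalize_poly hcG hpG w i k hwG rfl, ?_⟩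
        have := normalize_poly hcH hpH w i k hwH (by simp only [k, hk, hcard])
        rwa [← hcard, ← htr] at this
      · rw [Function.update_of_ne (by omega)]
        exact hv j h
  obtain ⟨v, hv⟩ := main i
  exact ⟨v i, hv i le_rfl⟩

theorem posSemidef_of_sq_eq {n : Type*} [Fintype n] [DecidableEq n] {M K : Matrix n n ℝ}
    (hM : M.IsHermitian) (hK : K.PosDef) (h : M * M = K * M) : M.PosSemidef := by
  have h' : M * M = M * K := by
    have := congrArg Matrix.conjTranspose h
    rwa [Matrix.conjTranspose_mul, Matrix.conjTranspose_mul, hM.eq, hK.1.eq] at this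
  have hu : IsUnit K.det := (Matrix.isUnit_iff_isUnit_det K).mp hK.isUnit
  have e : M * K⁻¹ * M = M := by
    have h1 : K * (M * K⁻¹ * M) = K * M := by
      calc K * (M * K⁻¹ * M) = (K * M) * (K⁻¹ * M) := by simp only [Matrix.mul_assoc]
        _ = M * (K * K⁻¹) * M := by rw [← h, h']; simp only [Matrix.mul_assoc]
        _ = K * M := by rw [Matrix.mul_nonsing_inv _ hu, Matrix.mul_one, h]
    have h2 := congrArg (fun Z => K⁻¹ * Z) h1
    simpa only [← Matrix.mul_assoc, Matrix.nonsing_inv_mul _ hu, Matrix.one_mul] using h2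
  have h3 := hK.inv.posSemidef.conjTranspose_mul_mul_same M
  rwa [hM.eq, e] at h3

/-- The isomorphism matrix of two distance regular graphs with the same parameters. -/
noncomputable def isoMat {α β : Type*} [Fintype α] (G : SimpleGraph α) (H : SimpleGraph β) :
    Matrix (α × β) (α × β) ℝ :=
  Matrix.of fun x y => if G.dist x.1 y.1 = H.dist x.2 y.2 then
    (pairCount G (G.dist x.1 y.1))⁻¹ else 0

theorem isoMat_apply {α β : Type*} [Fintype α] (G : SimpleGraph α) (H : SimpleGraph β)
    (g g' : α) (h h' : β) : isoMat G H (g, h) (g', h') = if G.dist g g' = H.dist h h' then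
    (pairCount G (G.dist g g'))⁻¹ else 0 := rfl

open scoped Kronecker

theorem kron_one_mul {α β : Type*} [Fintype α] [Fintype β] [DecidableEq α] [DecidableEq β]
    (X : Matrix α α ℝ) (M : Matrix (α × β) (α × β) ℝ) (g : α) (h : β) (y : α × β) :
    ((X ⊗ₖ (1 : Matrix β β ℝ)) * M) (g, h) y = ∑ w, X g w * M (w, h) y := by
  rw [Matrix.mul_apply, Fintype.sum_prod_type]
  simp [Matrix.kroneckerMap_apply, Matrix.one_apply]

theorem one_kron_mul {α β : Type*} [Fintype α] [Fintype β] [DecidableEq α] [DecidableEq β]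
    (X : Matrix β β ℝ) (M : Matrix (α × β) (α × β) ℝ) (g : α) (h : β) (y : α × β) :
    (((1 : Matrix α α ℝ) ⊗ₖ X) * M) (g, h) y = ∑ w, X h w * M (g, w) y := by
  rw [Matrix.mul_apply, Fintype.sum_prod_type_right]
  simp [Matrix.kroneckerMap_apply, Matrix.one_apply]

theorem trace3_swap {V : Type*} [Fintype V] (G : SimpleGraph V) (i j k : ℕ) :
    (distMat G i * distMat G j * distMat G k).trace =
      (distMat G i * distMat G k * distMat G j).trace := by
  rw [← Matrix.trace_transpose, Matrix.transpose_mul, Matrix.transpose_mul, distMat_transpose,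
    distMat_transpose, distMat_transpose, ← Matrix.mul_assoc, Matrix.trace_mul_comm,
    ← Matrix.mul_assoc]

theorem isoMat_intertwine {α β : Type*} [Fintype α] [Fintype β] [DecidableEq α] [DecidableEq β]
    {G : SimpleGraph α} {H : SimpleGraph β}
    {p p' : ℕ → ℕ → ℕ → ℕ} (hpG : HasParams G p) (hpH : HasParams H p')
    (hT : ∀ i, pairCount G i = pairCount H i)
    (ht : ∀ i j k, (distMat G i * distMat G j * distMat G k).trace =
      (distMat H i * distMat H j * distMat H k).trace) (i : ℕ) :
    ((distMat G i) ⊗ₖ (1 : Matrix β β ℝ)) * isoMat G H =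
      ((1 : Matrix α α ℝ) ⊗ₖ (distMat H i)) * isoMat G H := by
  ext ⟨g, h⟩ ⟨g', h'⟩
  rw [kron_one_mul, one_kron_mul]
  have e1 : ∀ w, distMat G i g w * isoMat G H (w, h) (g', h') =
      (distMat G i g w * distMat G (H.dist h h') w g') * (pairCount G (H.dist h h'))⁻¹ := by
    intro w
    rw [isoMat_apply, distMat_apply G (H.dist h h')]
    split_ifs with hh <;> simp [hh]
  have e2 : ∀ w, distMat H i h w * isoMat G H (g, w) (g', h') =
      (distMat H i h w * distMat H (G.dist g g') w h') * (pairCount G (G.dist g g'))⁻¹ := by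
    intro w
    rw [isoMat_apply, distMat_apply H (G.dist g g')]
    simp only [eq_comm (a := G.dist g g')]
    split_ifs with hh <;> simp
  simp only [e1, e2]
  rw [← Finset.sum_mul, ← Finset.sum_mul, ← Matrix.mul_apply, ← Matrix.mul_apply,
    distMat_mul hpG, distMat_mul hpH]
  have h1 := trace_distMat_mul3 hpG i (H.dist h h') (G.dist g g')
  have h2 := trace_distMat_mul3 hpH i (G.dist g g') (H.dist h h')
  rw [trace3_swap, ← ht, h1, ← hT] at h2
  have t1 := (pairCount_pos G g g').ne'
  have t2 := (pairCount_pos H h h').ne'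
  rw [← hT] at t2
  field_simp
  linarith

theorem isoMat_posSemidef {α β : Type*} [Fintype α] [Fintype β] [DecidableEq α] [DecidableEq β]
    {G : SimpleGraph α} {H : SimpleGraph β} (hcG : G.Connected)
    {p p' : ℕ → ℕ → ℕ → ℕ} (hpG : HasParams G p) (hpH : HasParams H p')
    (hT : ∀ i, pairCount G i = pairCount H i)
    (ht : ∀ i j k, (distMat G i * distMat G j * distMat G k).trace =
      (distMat H i * distMat H j * distMat H k).trace) :
    (isoMat G H).PosSemidef := by
  have hint := isoMat_intertwine hpG hpH hT ht
  obtain ⟨N, hN⟩ : ∃ N, ∀ g g', G.dist g g' ≤ N :=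
    ⟨Finset.univ.sup fun q : α × α => G.dist q.1 q.2, fun g g' =>
      Finset.le_sup (f := fun q : α × α => G.dist q.1 q.2) (Finset.mem_univ (g, g'))⟩
  have hTnn : ∀ i, 0 ≤ (pairCount G i)⁻¹ := fun i => inv_nonneg.mpr <|
    Finset.sum_nonneg fun a _ => Finset.sum_nonneg fun b _ => by
      rw [distMat_apply]; split_ifs <;> norm_num
  have hM : isoMat G H = ∑ i ∈ Finset.range (N + 1), (pairCount G i)⁻¹ •
      ((distMat G i ⊗ₖ (1 : Matrix β β ℝ)) * ((1 : Matrix α α ℝ) ⊗ₖ distMat H i)) := by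
    ext ⟨g, h⟩ ⟨g', h'⟩
    rw [Matrix.sum_apply, isoMat_apply]
    simp only [← Matrix.mul_kronecker_mul, Matrix.mul_one, Matrix.one_mul, Matrix.smul_apply,
      Matrix.kroneckerMap_apply, distMat_apply, smul_eq_mul]
    rw [Finset.sum_eq_single (G.dist g g')]
    · simp [eq_comm]
    · intro b _ hb
      simp [hb.symm]
    · intro hh
      exact absurd (Finset.mem_range.mpr (Nat.lt_succ_of_le (hN g g'))) hh
  let K : Matrix (α × β) (α × β) ℝ := ∑ i ∈ Finset.range (N + 1), (pairCount G i)⁻¹ •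
      ((distMat G i ⊗ₖ (1 : Matrix β β ℝ)) * (distMat G i ⊗ₖ (1 : Matrix β β ℝ)))
  have hh : ∀ i, (distMat G i ⊗ₖ (1 : Matrix β β ℝ))ᴴ = (distMat G i ⊗ₖ (1 : Matrix β β ℝ)) := by
    intro i
    rw [Matrix.conjTranspose_kronecker, Matrix.conjTranspose_one,
      Matrix.conjTranspose_eq_transpose_of_trivial, distMat_transpose]
  have hK : K.PosDef := by
    simp only [K]
    rw [Finset.sum_range_succ']
    refine Matrix.PosDef.posSemidef_add ?_ ?_
    · refine Matrix.posSemidef_sum _ fun i _ => ?_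
      refine Matrix.PosSemidef.smul ?_ (hTnn _)
      have := Matrix.posSemidef_conjTranspose_mul_self (distMat G (i + 1) ⊗ₖ (1 : Matrix β β ℝ))
      rwa [hh] at this
    · rw [distMat_zero G hcG, Matrix.one_kronecker_one, Matrix.mul_one]
      refine Matrix.PosDef.smul Matrix.PosDef.one (inv_pos.mpr ?_)
      obtain ⟨g⟩ := hcG.nonempty
      simpa using pairCount_pos G g g
  refine posSemidef_of_sq_eq ?_ hK ?_
  · ext ⟨g, h⟩ ⟨g', h'⟩
    rw [Matrix.conjTranspose_apply, isoMat_apply, isoMat_apply, G.dist_comm, H.dist_comm]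
    rfl
  · refine (congrArg (fun Z => Z * isoMat G H) hM).trans ?_
    simp only [K]
    rw [Finset.sum_mul, Finset.sum_mul]
    refine Finset.sum_congr rfl fun i _ => ?_
    rw [Matrix.smul_mul, Matrix.smul_mul, Matrix.mul_assoc, Matrix.mul_assoc, hint]

open Polynomial in
theorem backward {α β : Type*}
    [Fintype α] [Fintype β] [DecidableEq α] [DecidableEq β]
    (G : SimpleGraph α) (H : SimpleGraph β)
    [DecidableRel G.Adj] [DecidableRel H.Adj]
    (hG : DistanceRegular G) (hH : DistanceRegular H)
    (hcp : (G.adjMatrix ℝ).charpoly = (H.adjMatrix ℝ).charpoly) :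
    ∃ M, IsIsoMatrix G H M ∧ M.PosSemidef ∧ ∀ p q, 0 ≤ M p q := by
  obtain ⟨hcG, p, hpG⟩ := hG
  obtain ⟨hcH, p', hpH⟩ := hH
  rw [← distMat_one, ← distMat_one] at hcp
  have hcard : Fintype.card α = Fintype.card β := by
    have := congrArg Polynomial.natDegree hcp
    rwa [Matrix.charpoly_natDegree_eq_dim, Matrix.charpoly_natDegree_eq_dim] at this
  have htr := trace_aeval_of_charpoly (A := distMat G 1) (B := distMat H 1)
    (by rw [Matrix.IsHermitian, Matrix.conjTranspose_eq_transpose_of_trivial, distMat_transpose])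
    (by rw [Matrix.IsHermitian, Matrix.conjTranspose_eq_transpose_of_trivial, distMat_transpose])
    hcp
  choose v hvG hvH using common_poly hcG hcH hpG hpH (by rw [hcard]) htr
  have ht : ∀ i j k, (distMat G i * distMat G j * distMat G k).trace =
      (distMat H i * distMat H j * distMat H k).trace := by
    intro i j k
    have := htr (v i * v j * v k)
    simpa only [map_mul, hvG, hvH] using this
  have hT : ∀ i, pairCount G i = pairCount H i := by
    intro i
    have := htr (v i * v i)
    simpa only [map_mul, hvG, hvH, trace_distMat_sq] using this
  refine ⟨isoMat G H, ⟨?_, ?_, ?_⟩, isoMat_posSemidef hcG hpG hpH hT ht, ?_⟩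
  · intro g g'
    have e : ∀ h h', isoMat G H (g, h) (g', h') =
        distMat H (G.dist g g') h h' * (pairCount G (G.dist g g'))⁻¹ := by
      intro h h'
      rw [isoMat_apply, distMat_apply]
      simp only [eq_comm (a := G.dist g g')]
      split_ifs with hh <;> simp
    simp only [e, ← Finset.sum_mul]
    change pairCount H _ * _ = 1
    rw [← hT]
    exact mul_inv_cancel₀ (pairCount_pos G g g').ne'
  · intro h h'
    have e : ∀ g g', isoMat G H (g, h) (g', h') =
        distMat G (H.dist h h') g g' * (pairCount G (H.dist h h'))⁻¹ := by
      intro g g'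
      rw [isoMat_apply, distMat_apply]
      split_ifs with hh <;> simp [hh]
    simp only [e, ← Finset.sum_mul]
    change pairCount G _ * _ = 1
    rw [hT]
    exact mul_inv_cancel₀ (pairCount_pos H h h').ne'
  · intro g g' h h' hn
    rw [isoMat_apply, if_neg]
    intro hd
    apply hn
    refine ⟨?_, ?_⟩
    · rw [← hcG.dist_eq_zero_iff, ← hcH.dist_eq_zero_iff, hd]
    · rw [← SimpleGraph.dist_eq_one_iff_adj, ← SimpleGraph.dist_eq_one_iff_adj, hd]
  · rintro ⟨g, h⟩ ⟨g', h'⟩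
    rw [isoMat_apply]
    split_ifs
    · exact inv_nonneg.mpr (pairCount_pos G g g').le
    · exact le_rfl

/-- If the trace of `L M L` vanishes for positive semidefinite `M` and Hermitian `L`, `L M = 0`. -/
theorem mul_eq_zero_of_trace {n : Type*} [Fintype n] [DecidableEq n] {M L : Matrix n n ℝ}
    (hM : M.PosSemidef) (hL : L.IsHermitian) (h : (L * M * L).trace = 0) : L * M = 0 := by
  have h1 : L * M * L = 0 := by
    have := hM.conjTranspose_mul_mul_same L
    rw [hL.eq] at this
    exact this.trace_eq_zero_iff.mp h
  have h2 : M * L = 0 := by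
    ext i j
    have h3 : star (L.col j) ⬝ᵥ (M *ᵥ L.col j) = 0 := by
      have h4 : star (L.col j) = L.row j := by
        ext i
        have := congrFun (congrFun hL.eq j) i
        simpa using this
      have h5 := congrFun (congrFun h1 j) j
      rw [Matrix.mul_assoc] at h5
      rw [h4]
      exact h5
    rw [hM.dotProduct_mulVec_zero_iff] at h3
    exact congrFun h3 i
  have := congrArg Matrix.conjTranspose h2
  rwa [Matrix.conjTranspose_mul, hM.1.eq, hL.eq, Matrix.conjTranspose_zero] at this

section iso

variable {α β : Type*} [Fintype α] [Fintype β] {G : SimpleGraph α} {H : SimpleGraph β}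
  {M : Matrix (α × β) (α × β) ℝ}

theorem iso_zero_left (hM : IsIsoMatrix G H M) {g g' : α} (hg : g ≠ g') (h : β) :
    M (g, h) (g', h) = 0 :=
  hM.2.2 g g' h h fun hr => hg (hr.1.mpr rfl)

theorem iso_zero_right (hM : IsIsoMatrix G H M) {h h' : β} (hh : h ≠ h') (g : α) :
    M (g, h) (g, h') = 0 :=
  hM.2.2 g g h h' fun hr => hh (hr.1.mp rfl)

theorem iso_diag_left (hM : IsIsoMatrix G H M) (g : α) : ∑ h, M (g, h) (g, h) = 1 := by
  rw [← hM.1 g g]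
  refine Finset.sum_congr rfl fun h _ => ?_
  rw [Finset.sum_eq_single h]
  · intro h' _ hne
    exact iso_zero_right hM hne.symm g
  · simp

theorem iso_diag_right (hM : IsIsoMatrix G H M) (h : β) : ∑ g, M (g, h) (g, h) = 1 := by
  rw [← hM.2.1 h h]
  refine Finset.sum_congr rfl fun g _ => ?_
  rw [Finset.sum_eq_single g]
  · intro h' _ hne
    exact iso_zero_left hM hne.symm h
  · simp

theorem trace_mul_kron (X : Matrix α α ℝ) (Y : Matrix β β ℝ) :
    (M * (X ⊗ₖ Y)).trace = ∑ g, ∑ h, ∑ g', ∑ h', M (g, h) (g', h') * (X g' g * Y h' h) := by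
  simp only [Matrix.trace, Matrix.diag_apply, Matrix.mul_apply, Fintype.sum_prod_type,
    Matrix.kroneckerMap_apply]

theorem trace_mul_kron_one [DecidableEq β] (hM : IsIsoMatrix G H M) (X : Matrix α α ℝ) :
    (M * (X ⊗ₖ (1 : Matrix β β ℝ))).trace = X.trace := by
  rw [trace_mul_kron, Matrix.trace]
  refine Finset.sum_congr rfl fun g _ => ?_
  have : ∀ h, ∑ g', ∑ h', M (g, h) (g', h') * (X g' g * (1 : Matrix β β ℝ) h' h)
      = M (g, h) (g, h) * X g g := by
    intro h
    rw [Finset.sum_eq_single g]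
    · rw [Finset.sum_eq_single h] <;> simp +contextual [Matrix.one_apply]
    · intro g' _ hne
      rw [Finset.sum_eq_single h]
      · rw [iso_zero_left hM hne.symm, zero_mul]
      · intro h' _ hne'
        simp [Matrix.one_apply, hne']
      · simp
    · simp
  simp only [this, ← Finset.sum_mul, iso_diag_left hM, one_mul, Matrix.diag_apply]

theorem trace_mul_one_kron [DecidableEq α] (hM : IsIsoMatrix G H M) (Y : Matrix β β ℝ) :
    (M * ((1 : Matrix α α ℝ) ⊗ₖ Y)).trace = Y.trace := by
  rw [trace_mul_kron, Matrix.trace, Finset.sum_comm]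
  refine Finset.sum_congr rfl fun h _ => ?_
  have : ∀ g, ∑ g', ∑ h', M (g, h) (g', h') * ((1 : Matrix α α ℝ) g' g * Y h' h)
      = M (g, h) (g, h) * Y h h := by
    intro g
    rw [Finset.sum_eq_single g]
    · rw [Finset.sum_eq_single h]
      · simp
      · intro h' _ hne
        rw [iso_zero_right hM hne.symm, zero_mul]
      · simp
    · intro g' _ hne
      simp [Matrix.one_apply, hne]
    · simp
  simp only [this, ← Finset.sum_mul, iso_diag_right hM, one_mul, Matrix.diag_apply]

theorem trace_adj_sq [DecidableRel G.Adj] :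
    (G.adjMatrix ℝ * G.adjMatrix ℝ).trace = ∑ g, ∑ g', G.adjMatrix ℝ g g' := by
  simp only [Matrix.trace, Matrix.diag_apply, Matrix.mul_apply]
  refine Finset.sum_congr rfl fun g _ => Finset.sum_congr rfl fun g' _ => ?_
  simp only [SimpleGraph.adjMatrix_apply, G.adj_comm g' g]
  split_ifs <;> simp

theorem iso_adj [DecidableRel G.Adj] [DecidableRel H.Adj] (hM : IsIsoMatrix G H M)
    (g g' : α) (h h' : β) : M (g, h) (g', h') * G.adjMatrix ℝ g g'
      = M (g, h) (g', h') * H.adjMatrix ℝ h h' := by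
  by_cases hr : relEq G H g g' h h'
  · simp only [SimpleGraph.adjMatrix_apply, hr.2]
  · rw [hM.2.2 _ _ _ _ hr]; simp

theorem iso_adj' [DecidableRel G.Adj] [DecidableRel H.Adj] (hM : IsIsoMatrix G H M)
    (g g' : α) (h h' : β) :
    M (g, h) (g', h') * (G.adjMatrix ℝ g g' * H.adjMatrix ℝ h h')
      = M (g, h) (g', h') * G.adjMatrix ℝ g g' := by
  by_cases hr : relEq G H g g' h h'
  · simp only [SimpleGraph.adjMatrix_apply, hr.2]
    split_ifs <;> simp
  · rw [hM.2.2 _ _ _ _ hr]; simp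

theorem trace_adj_kron_left [DecidableRel G.Adj] [DecidableRel H.Adj] (hM : IsIsoMatrix G H M) :
    (M * (G.adjMatrix ℝ ⊗ₖ H.adjMatrix ℝ)).trace = (G.adjMatrix ℝ * G.adjMatrix ℝ).trace := by
  rw [trace_mul_kron, trace_adj_sq]
  refine Finset.sum_congr rfl fun g _ => ?_
  rw [Finset.sum_comm]
  refine Finset.sum_congr rfl fun g' _ => ?_
  have : ∀ h h', M (g, h) (g', h') * (G.adjMatrix ℝ g' g * H.adjMatrix ℝ h' h)
      = M (g, h) (g', h') * G.adjMatrix ℝ g g' := by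
    intro h h'
    rw [← iso_adj' hM]
    simp only [SimpleGraph.adjMatrix_apply, G.adj_comm g' g, H.adj_comm h' h]
  simp only [this, ← Finset.sum_mul, hM.1, one_mul]

theorem trace_adj_kron_right [DecidableRel G.Adj] [DecidableRel H.Adj] (hM : IsIsoMatrix G H M) :
    (M * (G.adjMatrix ℝ ⊗ₖ H.adjMatrix ℝ)).trace = (H.adjMatrix ℝ * H.adjMatrix ℝ).trace := by
  rw [trace_mul_kron, trace_adj_sq, Finset.sum_comm]
  refine Finset.sum_congr rfl fun h _ => ?_
  have : ∀ g g' h', M (g, h) (g', h') * (G.adjMatrix ℝ g' g * H.adjMatrix ℝ h' h)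
      = M (g, h) (g', h') * H.adjMatrix ℝ h h' := by
    intro g g' h'
    rw [← iso_adj hM, ← iso_adj' hM]
    simp only [SimpleGraph.adjMatrix_apply, G.adj_comm g' g, H.adj_comm h' h]
  simp only [this]
  simp only [Finset.sum_comm (s := (Finset.univ : Finset α)) (t := (Finset.univ : Finset β))]
  refine Finset.sum_congr rfl fun h' _ => ?_
  simp only [← Finset.sum_mul, hM.2.1, one_mul]

theorem iso_intertwine [DecidableEq α] [DecidableEq β] [DecidableRel G.Adj] [DecidableRel H.Adj]
    (hM : IsIsoMatrix G H M) (hpsd : M.PosSemidef) :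
    (G.adjMatrix ℝ ⊗ₖ (1 : Matrix β β ℝ)) * M = ((1 : Matrix α α ℝ) ⊗ₖ H.adjMatrix ℝ) * M := by
  rw [← sub_eq_zero, ← Matrix.sub_mul]
  refine mul_eq_zero_of_trace hpsd ?_ ?_
  · rw [Matrix.IsHermitian, Matrix.conjTranspose_sub, Matrix.conjTranspose_kronecker,
      Matrix.conjTranspose_kronecker, Matrix.conjTranspose_one, Matrix.conjTranspose_one,
      Matrix.conjTranspose_eq_transpose_of_trivial, Matrix.conjTranspose_eq_transpose_of_trivial,
      SimpleGraph.transpose_adjMatrix, SimpleGraph.transpose_adjMatrix]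
  · rw [Matrix.mul_assoc, Matrix.trace_mul_comm, Matrix.mul_assoc]
    have : (G.adjMatrix ℝ ⊗ₖ (1 : Matrix β β ℝ) - (1 : Matrix α α ℝ) ⊗ₖ H.adjMatrix ℝ) *
        (G.adjMatrix ℝ ⊗ₖ (1 : Matrix β β ℝ) - (1 : Matrix α α ℝ) ⊗ₖ H.adjMatrix ℝ) =
        ((G.adjMatrix ℝ * G.adjMatrix ℝ) ⊗ₖ (1 : Matrix β β ℝ)
          - G.adjMatrix ℝ ⊗ₖ H.adjMatrix ℝ) - (G.adjMatrix ℝ ⊗ₖ H.adjMatrix ℝ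
          - (1 : Matrix α α ℝ) ⊗ₖ (H.adjMatrix ℝ * H.adjMatrix ℝ)) := by
      rw [Matrix.sub_mul, Matrix.mul_sub, Matrix.mul_sub]
      simp only [← Matrix.mul_kronecker_mul, Matrix.one_mul, Matrix.mul_one]
    rw [this, Matrix.mul_sub, Matrix.mul_sub, Matrix.mul_sub, Matrix.trace_sub, Matrix.trace_sub,
      Matrix.trace_sub, trace_mul_kron_one hM, trace_mul_one_kron hM, trace_adj_kron_left hM,
      ← trace_adj_kron_right hM, trace_adj_kron_left hM]
    ring

/-- The linear map associated with an isomorphism matrix. -/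
noncomputable def phi (M : Matrix (α × β) (α × β) ℝ) : Matrix α α ℝ →ₗ[ℝ] Matrix β β ℝ where
  toFun X := Matrix.of fun h h' => ∑ g, ∑ g', M (g, h) (g', h') * X g g'
  map_add' X Y := by
    ext h h'
    simp [mul_add, Finset.sum_add_distrib]
  map_smul' c X := by
    ext h h'
    simp [Finset.mul_sum, mul_left_comm]

theorem phi_apply (X : Matrix α α ℝ) (h h' : β) :
    phi M X h h' = ∑ g, ∑ g', M (g, h) (g', h') * X g g' := rfl

theorem phi_one [DecidableEq α] [DecidableEq β] (hM : IsIsoMatrix G H M) :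
    phi M (1 : Matrix α α ℝ) = 1 := by
  ext h h'
  simp only [phi_apply, Matrix.one_apply, mul_ite, mul_one, mul_zero, Finset.sum_ite_eq,
    Finset.mem_univ, if_true]
  split_ifs with hh
  · subst hh
    exact iso_diag_right hM h
  · exact Finset.sum_eq_zero fun g _ => iso_zero_right hM hh g

theorem phi_trace (hM : IsIsoMatrix G H M) (X : Matrix α α ℝ) :
    (phi M X).trace = X.trace := by
  simp only [Matrix.trace, Matrix.diag_apply, phi_apply]
  rw [Finset.sum_comm]
  refine Finset.sum_congr rfl fun g _ => ?_
  have : ∀ h, ∑ g', M (g, h) (g', h) * X g g' = M (g, h) (g, h) * X g g := by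
    intro h
    rw [Finset.sum_eq_single g]
    · intro g' _ hne
      rw [iso_zero_left hM hne.symm, zero_mul]
    · simp
  simp only [this, ← Finset.sum_mul, iso_diag_left hM, one_mul]

theorem phi_mul [DecidableEq α] [DecidableEq β] [DecidableRel G.Adj] [DecidableRel H.Adj]
    (hM : IsIsoMatrix G H M) (hpsd : M.PosSemidef) (X : Matrix α α ℝ) :
    phi M (G.adjMatrix ℝ * X) = H.adjMatrix ℝ * phi M X := by
  have key := iso_intertwine hM hpsd
  ext h h'
  have k : ∀ w g', ∑ g, G.adjMatrix ℝ w g * M (g, h) (g', h')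
      = ∑ h'', H.adjMatrix ℝ h h'' * M (w, h'') (g', h') := by
    intro w g'
    rw [← kron_one_mul, ← one_kron_mul, key]
  calc phi M (G.adjMatrix ℝ * X) h h'
      = ∑ g, ∑ g', ∑ w, M (g, h) (g', h') * (G.adjMatrix ℝ g w * X w g') := by
        simp only [phi_apply, Matrix.mul_apply, Finset.mul_sum]
    _ = ∑ w, ∑ g', (∑ g, G.adjMatrix ℝ w g * M (g, h) (g', h')) * X w g' := by
        rw [Finset.sum_comm' (t' := Finset.univ) (s' := fun _ => Finset.univ) (by simp)]
        simp only [Finset.sum_mul]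
        rw [Finset.sum_comm' (t' := Finset.univ) (s' := fun _ => Finset.univ) (by simp)]
        rw [Finset.sum_congr rfl fun g _ => Finset.sum_comm]
        rw [Finset.sum_comm]
        refine Finset.sum_congr rfl fun w _ => ?_
        rw [Finset.sum_comm]
        refine Finset.sum_congr rfl fun g' _ => Finset.sum_congr rfl fun g _ => ?_
        simp only [SimpleGraph.adjMatrix_apply, G.adj_comm w g]
        ring
    _ = ∑ w, ∑ g', (∑ h'', H.adjMatrix ℝ h h'' * M (w, h'') (g', h')) * X w g' := by
        simp only [k]
    _ = _ := by
        rw [Matrix.mul_apply]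
        simp only [phi_apply, Finset.mul_sum, Finset.sum_mul]
        rw [Finset.sum_congr rfl fun w _ => Finset.sum_comm]
        rw [Finset.sum_comm]
        simp only [mul_assoc]

open Polynomial in
theorem phi_aeval [DecidableEq α] [DecidableEq β] [DecidableRel G.Adj] [DecidableRel H.Adj]
    (hM : IsIsoMatrix G H M) (hpsd : M.PosSemidef) (q : ℝ[X]) :
    phi M (aeval (G.adjMatrix ℝ) q) = aeval (H.adjMatrix ℝ) q := by
  have hpow : ∀ n : ℕ, phi M (G.adjMatrix ℝ ^ n) = H.adjMatrix ℝ ^ n := by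
    intro n
    induction n with
    | zero => simp [phi_one hM]
    | succ n ih => rw [pow_succ', phi_mul hM hpsd, ih, pow_succ']
  induction q using Polynomial.induction_on' with
  | add p q hp hq => rw [map_add, map_add, hp, hq, map_add]
  | monomial n a =>
    rw [aeval_monomial, aeval_monomial, ← Algebra.smul_def, ← Algebra.smul_def, map_smul, hpow]

theorem phi_symm (hpsd : M.PosSemidef) (X : Matrix α α ℝ) (hX : ∀ g g', X g g' = X g' g)
    (h h' : β) : phi M X h h' = phi M X h' h := by
  rw [phi_apply, phi_apply, Finset.sum_comm]
  refine Finset.sum_congr rfl fun g _ => Finset.sum_congr rfl fun g' _ => ?_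
  have := congrFun (congrFun hpsd.1.eq (g, h')) (g', h)
  simp at this
  rw [hX g g', this]

end iso

/-- Combinatorial core: a colouring of pairs satisfying the intersection number relations is the
distance function. -/
theorem regular_of_colour {α β : Type*} [Fintype α] [Fintype β] [Nonempty β]
    {G : SimpleGraph α} {H : SimpleGraph β} (hcG : G.Connected)
    {p : ℕ → ℕ → ℕ → ℕ} (hp : HasParams G p) (c : β → β → ℕ)
    (h0 : ∀ h h', c h h' = 0 ↔ h = h') (h1 : ∀ h h', c h h' = 1 ↔ H.Adj h h')
    (hmul : ∀ i j h h', Set.ncard {w : β | c h w = i ∧ c w h' = j} = p i j (c h h'))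
    (hex : ∀ h h', ∃ u v, G.dist u v = c h h') : DistanceRegular H := by
  have step1 : ∀ i h h', c h h' = i + 1 → ∃ w, H.Adj h w ∧ c w h' = i := by
    intro i h h' hc
    obtain ⟨u, v, huv⟩ := hex h h'
    rw [hc] at huv
    have := param_pos hcG hp huv
    rw [← hc, ← hmul 1 i h h', Set.ncard_pos] at this
    obtain ⟨w, hw1, hw2⟩ := this
    exact ⟨w, (h1 _ _).mp hw1, hw2⟩
  have step2 : ∀ h w h', H.Adj h w → c h h' ≤ c w h' + 1 := by
    intro h w h' hadj
    by_contra hlt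
    push Not at hlt
    obtain ⟨u, v, huv⟩ := hex h h'
    rw [← huv] at hlt
    have := param_zero hcG hp hlt
    rw [huv, ← hmul 1 (c w h') h h', Set.ncard_eq_zero] at this
    have hmem : w ∈ ({w' : β | c h w' = 1 ∧ c w' h' = c w h'} : Set β) :=
      ⟨(h1 _ _).mpr hadj, rfl⟩
    rw [this] at hmem
    exact hmem
  have walk : ∀ i h h', c h h' = i → ∃ q : H.Walk h h', q.length = i := by
    intro i
    induction i with
    | zero =>
      intro h h' hc
      obtain rfl := (h0 h h').mp hc
      exact ⟨SimpleGraph.Walk.nil, rfl⟩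
    | succ i ih =>
      intro h h' hc
      obtain ⟨w, hw, hw'⟩ := step1 i h h' hc
      obtain ⟨q, hq⟩ := ih w h' hw'
      exact ⟨SimpleGraph.Walk.cons hw q, by simp [hq]⟩
  have le_walk : ∀ h h' (q : H.Walk h h'), c h h' ≤ q.length := by
    intro h h' q
    induction q with
    | nil => simp [h0]
    | cons hadj q ih =>
      rw [SimpleGraph.Walk.length_cons]
      exact (step2 _ _ _ hadj).trans (by omega)
  have hconn : H.Connected := by
    refine ⟨fun h h' => ?_⟩
    obtain ⟨q, _⟩ := walk _ h h' rfl
    exact ⟨q⟩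
  have hdist : ∀ h h', H.dist h h' = c h h' := by
    intro h h'
    obtain ⟨q, hq⟩ := walk _ h h' rfl
    obtain ⟨q', hq'⟩ := hconn.exists_walk_length_eq_dist h h'
    have e1 := SimpleGraph.dist_le q
    have e2 := le_walk h h' q'
    omega
  refine ⟨hconn, p, fun i j h h' => ?_⟩
  simp only [hdist]
  exact hmul i j h h'

open Polynomial in
theorem forward {α β : Type*}
    [Fintype α] [Fintype β] [DecidableEq α] [DecidableEq β]
    (G : SimpleGraph α) (H : SimpleGraph β)
    [DecidableRel G.Adj] [DecidableRel H.Adj]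
    (hG : DistanceRegular G) (M : Matrix (α × β) (α × β) ℝ)
    (hM : IsIsoMatrix G H M) (hpsd : M.PosSemidef) (hnn : ∀ p q, 0 ≤ M p q) :
    DistanceRegular H ∧ (G.adjMatrix ℝ).charpoly = (H.adjMatrix ℝ).charpoly := by
  have htr : ∀ q : ℝ[X], (aeval (G.adjMatrix ℝ) q).trace = (aeval (H.adjMatrix ℝ) q).trace := by
    intro q
    rw [← phi_aeval hM hpsd, phi_trace hM]
  refine ⟨?_, charpoly_of_trace_aeval
    (by rw [Matrix.IsHermitian, Matrix.conjTranspose_eq_transpose_of_trivial,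
      SimpleGraph.transpose_adjMatrix])
    (by rw [Matrix.IsHermitian, Matrix.conjTranspose_eq_transpose_of_trivial,
      SimpleGraph.transpose_adjMatrix]) htr⟩
  obtain ⟨hcG, p, hp⟩ := hG
  have hne : Nonempty β := by
    obtain ⟨g⟩ := hcG.nonempty
    by_contra hem
    rw [not_nonempty_iff] at hem
    have := hM.1 g g
    simp at this
  choose v hv _ using common_poly hcG hcG hp hp rfl (fun _ => rfl)
  rw [distMat_one] at hv
  obtain ⟨N, hN⟩ : ∃ N, ∀ g g', G.dist g g' ≤ N :=
    ⟨Finset.univ.sup fun q : α × α => G.dist q.1 q.2, fun g g' =>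
      Finset.le_sup (f := fun q : α × α => G.dist q.1 q.2) (Finset.mem_univ (g, g'))⟩
  have hmulE : ∀ i j, phi M (distMat G i * distMat G j)
      = phi M (distMat G i) * phi M (distMat G j) := by
    intro i j
    rw [← hv, ← hv, ← map_mul, phi_aeval hM hpsd, phi_aeval hM hpsd, phi_aeval hM hpsd, map_mul]
  have hEnn : ∀ i h h', 0 ≤ phi M (distMat G i) h h' := by
    intro i h h'
    rw [phi_apply]
    refine Finset.sum_nonneg fun g _ => Finset.sum_nonneg fun g' _ => mul_nonneg (hnn _ _) ?_
    rw [distMat_apply]; split_ifs <;> norm_num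
  have horth : ∀ i j, i ≠ j → ∀ h h', phi M (distMat G i) h h' * phi M (distMat G j) h h' = 0 := by
    intro i j hij
    have h1 : (phi M (distMat G i) * phi M (distMat G j)).trace = 0 := by
      rw [← hmulE, phi_trace hM, trace_mul_distMat (distMat G i) (fun k => if k = i then 1 else 0)
        (fun _ _ => rfl), if_neg hij.symm, zero_mul]
    simp only [Matrix.trace, Matrix.diag_apply, Matrix.mul_apply] at h1
    have hn : ∀ h h', 0 ≤ phi M (distMat G i) h h' * phi M (distMat G j) h' h :=
      fun h h' => mul_nonneg (hEnn _ _ _) (hEnn _ _ _)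
    intro h h'
    rw [Finset.sum_eq_zero_iff_of_nonneg
      (fun h _ => Finset.sum_nonneg fun h' _ => hn h h')] at h1
    have h2 := h1 h (Finset.mem_univ _)
    rw [Finset.sum_eq_zero_iff_of_nonneg (fun h' _ => hn h h')] at h2
    have h3 := h2 h' (Finset.mem_univ _)
    rwa [phi_symm hpsd _ (distMat_symm G j) h' h] at h3
  have hdecomp : ∀ f : ℕ → ℝ, ∀ X : Matrix α α ℝ, (∀ u v, X u v = f (G.dist u v)) →
      X = ∑ k ∈ Finset.range (N + 1), f k • distMat G k := by
    intro f X hX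
    ext u w
    rw [Matrix.sum_apply, hX]
    simp [distMat_apply, Nat.lt_succ_iff, hN]
  have hsum : ∀ h h', ∑ k ∈ Finset.range (N + 1), phi M (distMat G k) h h' = 1 := by
    intro h h'
    have := congrArg (phi M) (hdecomp (fun _ => 1) (Matrix.of fun _ _ => 1) (fun _ _ => rfl))
    have := congrFun (congrFun this h) h'
    simp only [one_smul, map_sum, Matrix.sum_apply] at this
    rw [← this, phi_apply]
    simpa using hM.2.1 h h'
  have hcol : ∀ h h', ∃ c, ∀ i, phi M (distMat G i) h h' = if c = i then 1 else 0 := by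
    intro h h'
    obtain ⟨c, hc, hc0⟩ : ∃ c ∈ Finset.range (N + 1), phi M (distMat G c) h h' ≠ 0 := by
      by_contra hall
      push Not at hall
      have := hsum h h'
      rw [Finset.sum_eq_zero hall] at this
      exact zero_ne_one this
    have hz : ∀ i, c ≠ i → phi M (distMat G i) h h' = 0 := by
      intro i hi
      exact (mul_eq_zero.mp (horth c i hi h h')).resolve_left hc0
    refine ⟨c, fun i => ?_⟩
    split_ifs with hi
    · subst hi
      rw [← hsum h h', Finset.sum_eq_single_of_mem c hc (fun b _ hb => hz b hb.symm)]
    · exact hz i hi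
  choose c hc using hcol
  refine regular_of_colour hcG hp c ?_ ?_ ?_ ?_
  · intro h h'
    have := hc h h' 0
    rw [distMat_zero G hcG, phi_one hM, Matrix.one_apply] at this
    by_cases e : h = h' <;> by_cases e' : c h h' = 0 <;> simp_all
  · intro h h'
    have h1 := hc h h' 1
    have h2 := phi_aeval hM hpsd (X : ℝ[X])
    simp only [aeval_X] at h2
    rw [distMat_one, h2, SimpleGraph.adjMatrix_apply] at h1
    by_cases e : H.Adj h h' <;> by_cases e' : c h h' = 1 <;> simp_all
  · intro i j h h'
    have h1 : (phi M (distMat G i) * phi M (distMat G j)) h h' = p i j (c h h') := by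
      rw [← hmulE, hdecomp (fun k => (p i j k : ℝ)) _ (distMat_mul hp i j), map_sum,
        Matrix.sum_apply]
      simp only [map_smul, Matrix.smul_apply, smul_eq_mul]
      have h3 := hsum h h'
      simp only [hc, Finset.sum_ite_eq, mul_ite, mul_one, mul_zero] at h3 ⊢
      split_ifs at h3 ⊢ with h4
      · rfl
      · norm_num at h3
    rw [Matrix.mul_apply] at h1
    simp only [hc, ← ite_and, mul_ite, mul_one, mul_zero] at h1
    rw [Finset.sum_boole] at h1
    have h2 := Nat.cast_injective (R := ℝ) h1
    rw [← h2, Set.ncard_eq_toFinset_card']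
    congr 1
    ext w
    simp [and_comm]
  · intro h h'
    by_contra hall
    push Not at hall
    have h1 : distMat G (c h h') = 0 := by
      ext u w
      rw [distMat_apply, if_neg (hall u w)]; rfl
    have h2 := hc h h' (c h h')
    rw [h1] at h2
    simp at h2

/-- For a distance regular graph `G`, a graph `H` is `DNN`-isomorphic to `G` iff `H`
is distance regular and cospectral to `G`. -/
theorem dnn_iso_iff_of_distanceRegular {α β : Type*}
    [Fintype α] [Fintype β] [DecidableEq α] [DecidableEq β]
    (G : SimpleGraph α) (H : SimpleGraph β)
    [DecidableRel G.Adj] [DecidableRel H.Adj]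
    (hG : DistanceRegular G) :
    (∃ M, IsIsoMatrix G H M ∧ M.PosSemidef ∧ ∀ p q, 0 ≤ M p q) ↔
      (DistanceRegular H ∧
        (G.adjMatrix ℝ).charpoly = (H.adjMatrix ℝ).charpoly) := by

  constructor
  · rintro ⟨M, hM, hpsd, hnn⟩
    exact forward G H hG M hM hpsd hnn
  · rintro ⟨hH, hcp⟩
    exact backward G H hG hH hcp
end

section
/- If finite simple graphs G and H satisfy G ≅_{S+} H, then the adjacency matrices of G and H have the same characteristic polynomial (G and H are cospectral), and the adjacency matrices of their complement graphs also have the same characteristic polynomial. -/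
open Matrix BigOperators

/-- quadruple sum -/
noncomputable def quadD {α β : Type*} [Fintype α] [Fintype β]
    (M : Matrix (α × β) (α × β) ℝ) (u : α → ℝ) (v : β → ℝ) : ℝ :=
  ∑ g, ∑ g', ∑ h, ∑ h', M (g, h) (g', h') * (u g * u g') * (v h * v h')

lemma quadD_swap {α β : Type*} [Fintype α] [Fintype β]
    (M : Matrix (α × β) (α × β) ℝ) (u : α → ℝ) (v : β → ℝ) :
    quadD (M.submatrix Prod.swap Prod.swap) v u = quadD M u v := by
  unfold quadD
  simp only [Matrix.submatrix_apply, Prod.swap_prod_mk]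
  simp only [← Fintype.sum_prod_type' (α₁ := β) (α₂ := β), ← Fintype.sum_prod_type' (α₁ := α) (α₂ := α)]
  rw [Finset.sum_comm]
  refine Finset.sum_congr rfl fun p _ => Finset.sum_congr rfl fun q _ => ?_
  ring

lemma quadD_nonneg {α β : Type*} [Fintype α] [Fintype β]
    (M : Matrix (α × β) (α × β) ℝ) (hM : M.PosSemidef) (u : α → ℝ) (v : β → ℝ) :
    0 ≤ quadD M u v := by
  have := hM.dotProduct_mulVec_nonneg (fun p : α × β => u p.1 * v p.2)
  refine this.trans_eq (Eq.symm ?_)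
  unfold quadD
  simp only [dotProduct, mulVec, Fintype.sum_prod_type, Finset.mul_sum, Pi.star_apply, star_trivial]
  refine Finset.sum_congr rfl fun g _ => ?_
  rw [Finset.sum_comm]
  refine Finset.sum_congr rfl fun h _ => Finset.sum_congr rfl fun g' _ =>
    Finset.sum_congr rfl fun h' _ => ?_
  ring

lemma quadD_half {α β : Type*} [Fintype α] [Fintype β]
    (M : Matrix (α × β) (α × β) ℝ)
    (h2 : ∀ h h' : β, ∑ g : α, ∑ g' : α, M (g, h) (g', h') = 1)
    (X : Matrix α α ℝ) (Y : Matrix β β ℝ)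
    (hXY : ∀ g g' h h', M (g, h) (g', h') ≠ 0 → X g g' = Y h h')
    (x : α → ℝ) (U : Matrix α α ℝ) (hX : ∀ g g', X g g' = ∑ i, x i * (U g i * U g' i))
    (v : β → ℝ) (y : ℝ) (hY : ∑ h, ∑ h', Y h h' * (v h * v h') = y) :
    ∑ i, x i * quadD M (fun g => U g i) v = y := by
  have key : ∀ h h', ∑ g, ∑ g', M (g, h) (g', h') * X g g' = Y h h' := by
    intro h h'
    have : ∀ g g', M (g, h) (g', h') * X g g' = M (g, h) (g', h') * Y h h' := by
      intro g g'
      by_cases h0 : M (g, h) (g', h') = 0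
      · simp [h0]
      · rw [hXY _ _ _ _ h0]
    simp only [this, ← Finset.sum_mul, h2, one_mul]
  rw [← hY]
  simp only [← key, hX]
  unfold quadD
  simp only [Finset.mul_sum, Finset.sum_mul]
  have e : ∀ (F : α → α → β → β → α → ℝ), ∑ i, ∑ g, ∑ g', ∑ h, ∑ h', F g g' h h' i
     = ∑ h, ∑ h', ∑ g, ∑ g', ∑ i, F g g' h h' i := by
    intro F
    have e1 : ∀ i, ∑ g, ∑ g', ∑ h, ∑ h', F g g' h h' i = ∑ h, ∑ h', ∑ g, ∑ g', F g g' h h' i := by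
      intro i
      have := Finset.sum_comm (s := (Finset.univ : Finset (α × α)))
        (t := (Finset.univ : Finset (β × β))) (f := fun p q => F p.1 p.2 q.1 q.2 i)
      simpa only [Fintype.sum_prod_type] using this
    simp only [e1]
    rw [Finset.sum_comm]
    refine Finset.sum_congr rfl fun h _ => ?_
    rw [Finset.sum_comm]
    refine Finset.sum_congr rfl fun h' _ => ?_
    rw [Finset.sum_comm]
    refine Finset.sum_congr rfl fun g _ => ?_
    rw [Finset.sum_comm]
  rw [e]
  refine Finset.sum_congr rfl fun _ _ => Finset.sum_congr rfl fun _ _ => Finset.sum_congr rfl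
    fun _ _ => Finset.sum_congr rfl fun _ _ => Finset.sum_congr rfl fun _ _ => ?_
  ring

lemma herm_facts {α : Type*} [Fintype α] [DecidableEq α] (A : Matrix α α ℝ) (hA : A.IsHermitian) :
    ∃ U : Matrix α α ℝ, (∀ g g', A g g' = ∑ i, hA.eigenvalues i * (U g i * U g' i)) ∧
      (∀ g g', (1 : Matrix α α ℝ) g g' = ∑ i, 1 * (U g i * U g' i)) ∧
      (∀ i, ∑ g, ∑ g', A g g' * (U g i * U g' i) = hA.eigenvalues i) ∧
      (∀ i, ∑ g, ∑ g', (1 : Matrix α α ℝ) g g' * (U g i * U g' i) = 1) := by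
  obtain ⟨U, hU1, hU2, hA'⟩ : ∃ U : Matrix α α ℝ, U * Uᵀ = 1 ∧ Uᵀ * U = 1 ∧
      A = U * diagonal hA.eigenvalues * Uᵀ := by
    refine ⟨hA.eigenvectorUnitary, ?_, ?_, ?_⟩
    · exact Unitary.mul_star_self_of_mem hA.eigenvectorUnitary.2
    · exact Unitary.star_mul_self_of_mem hA.eigenvectorUnitary.2
    · have := hA.spectral_theorem
      rw [Unitary.conjStarAlgAut_apply] at this
      exact this
  have hD : Uᵀ * A * U = diagonal hA.eigenvalues := by
    calc Uᵀ * A * U = Uᵀ * (U * diagonal hA.eigenvalues * Uᵀ) * U := by rw [← hA']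
      _ = (Uᵀ * U) * diagonal hA.eigenvalues * (Uᵀ * U) := by simp only [Matrix.mul_assoc]
      _ = _ := by rw [hU2]; simp
  have quad : ∀ (X : Matrix α α ℝ) i, ∑ g, ∑ g', X g g' * (U g i * U g' i) = (Uᵀ * X * U) i i := by
    intro X i
    simp only [Matrix.mul_apply, Finset.sum_mul, transpose_apply]
    rw [Finset.sum_comm]
    exact Finset.sum_congr rfl fun _ _ => Finset.sum_congr rfl fun _ _ => by ring
  refine ⟨U, ?_, ?_, ?_, ?_⟩
  · intro g g'
    conv_lhs => rw [hA']
    rw [Matrix.mul_apply]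
    simp only [mul_diagonal, transpose_apply]
    exact Finset.sum_congr rfl fun _ _ => by ring
  · intro g g'
    rw [← hU1]
    simp [Matrix.mul_apply]
  · intro i
    rw [quad, hD]; simp
  · intro i
    rw [quad]; simp [hU2]

lemma charpoly_core {α β : Type*} [Fintype α] [Fintype β] [DecidableEq α] [DecidableEq β]
    (M : Matrix (α × β) (α × β) ℝ) (hM : M.PosSemidef)
    (h1 : ∀ g g' : α, ∑ h : β, ∑ h' : β, M (g, h) (g', h') = 1)
    (h2 : ∀ h h' : β, ∑ g : α, ∑ g' : α, M (g, h) (g', h') = 1)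
    (A : Matrix α α ℝ) (B : Matrix β β ℝ) (hA : A.IsHermitian) (hB : B.IsHermitian)
    (hAB : ∀ g g' h h', M (g, h) (g', h') ≠ 0 → A g g' = B h h')
    (hI : ∀ g g' h h', M (g, h) (g', h') ≠ 0 → (g = g' ↔ h = h')) :
    A.charpoly = B.charpoly := by
  obtain ⟨U, u1, u2, u3, u4⟩ := herm_facts A hA
  obtain ⟨V, v1, v2, v3, v4⟩ := herm_facts B hB
  set l := hA.eigenvalues with hl
  set m := hB.eigenvalues with hm
  have hI' : ∀ g g' h h', M (g, h) (g', h') ≠ 0 →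
      (1 : Matrix α α ℝ) g g' = (1 : Matrix β β ℝ) h h' := by
    intro g g' h h' h0
    simp only [Matrix.one_apply, hI _ _ _ _ h0]
  let D : α → β → ℝ := fun i j => quadD M (fun g => U g i) (fun h => V h j)
  have hD0 : ∀ i j, 0 ≤ D i j := fun i j => quadD_nonneg M hM _ _
  have d1 : ∀ j, ∑ i, l i * D i j = m j := fun j =>
    quadD_half M h2 A B hAB l U u1 _ _ (v3 j)
  have d2 : ∀ j, ∑ i, D i j = 1 := fun j => by
    simpa using quadD_half M h2 1 1 hI' (fun _ => 1) U u2 _ _ (v4 j)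
  have d3 : ∀ i, ∑ j, m j * D i j = l i := fun i => by
    have := quadD_half (M.submatrix Prod.swap Prod.swap) h1 B A
      (fun h h' g g' h0 => (hAB g g' h h' h0).symm) m V v1 _ _ (u3 i)
    simpa only [quadD_swap] using this
  have d4 : ∀ i, ∑ j, D i j = 1 := fun i => by
    have := quadD_half (M.submatrix Prod.swap Prod.swap) h1 1 1
      (fun h h' g g' h0 => (hI' g g' h h' h0).symm) (fun _ => 1) V v2 _ _ (u4 i)
    simpa only [quadD_swap, one_mul] using this
  have hs : ∑ i, ∑ j, D i j * (l i - m j) ^ 2 = 0 := by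
    have e : ∀ i j, D i j * (l i - m j) ^ 2 =
        (l i * l i * D i j - l i * (m j * D i j)) + (m j * m j * D i j - m j * (l i * D i j)) := by
      intro i j; ring
    simp only [e, Finset.sum_add_distrib]
    rw [Finset.sum_comm (f := fun i j => (m j * m j * D i j - m j * (l i * D i j)))]
      <;> simp only [Finset.sum_sub_distrib, ← Finset.mul_sum, d3, d4]
    simp [Finset.sum_sub_distrib, ← Finset.mul_sum, d1, d2]
  have hz : ∀ i j, D i j ≠ 0 → l i = m j := by
    intro i j h0
    have nn : ∀ i j, 0 ≤ D i j * (l i - m j) ^ 2 := fun i j => mul_nonneg (hD0 i j) (sq_nonneg _)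
    have a := (Finset.sum_eq_zero_iff_of_nonneg
      (fun i _ => Finset.sum_nonneg fun j _ => nn i j)).1 hs i (Finset.mem_univ _)
    have b := (Finset.sum_eq_zero_iff_of_nonneg (fun j _ => nn i j)).1 a j (Finset.mem_univ _)
    have c := (mul_eq_zero.1 b).resolve_left h0
    exact sub_eq_zero.1 (pow_eq_zero_iff (two_ne_zero) |>.1 c)
  have hf : ∀ f : ℝ → ℝ, ∑ i, f (l i) = ∑ j, f (m j) := by
    intro f
    calc ∑ i, f (l i) = ∑ i, ∑ j, f (l i) * D i j := by simp only [← Finset.mul_sum, d4, mul_one]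
      _ = ∑ i, ∑ j, f (m j) * D i j := by
        refine Finset.sum_congr rfl fun i _ => Finset.sum_congr rfl fun j _ => ?_
        by_cases h0 : D i j = 0
        · simp [h0]
        · rw [hz i j h0]
      _ = ∑ j, f (m j) := by
        rw [Finset.sum_comm]; simp only [← Finset.mul_sum, d2, mul_one]
  have hms : (Finset.univ.val.map l) = (Finset.univ.val.map m) := by
    ext t
    have := hf (fun s => if t = s then 1 else 0)
    simp only [Finset.sum_boole] at this
    simp only [Multiset.count_map]
    exact_mod_cast this
  rw [hA.charpoly_eq, hB.charpoly_eq]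
  have := congrArg (fun s => (s.map (fun t : ℝ => Polynomial.X - Polynomial.C t)).prod) hms
  simp only [Multiset.map_map] at this
  exact this

/-- If `G ≅_{S+} H`, then `G` and `H` are cospectral, as are their complements. -/
theorem cospectral_of_sPlus_iso {α β : Type*}
    [Fintype α] [Fintype β] [DecidableEq α] [DecidableEq β]
    (G : SimpleGraph α) (H : SimpleGraph β)
    [DecidableRel G.Adj] [DecidableRel H.Adj]
    (h : ∃ M, IsIsoMatrix G H M ∧ M.PosSemidef) :
    (G.adjMatrix ℝ).charpoly = (H.adjMatrix ℝ).charpoly ∧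
    (Gᶜ.adjMatrix ℝ).charpoly = (Hᶜ.adjMatrix ℝ).charpoly := by
  obtain ⟨M, ⟨h1, h2, h3⟩, hM⟩ := h
  have hr : ∀ g g' h h', M (g, h) (g', h') ≠ 0 → relEq G H g g' h h' := fun g g' h h' h0 => by
    by_contra hc
    exact h0 (h3 _ _ _ _ hc)
  constructor
  · refine charpoly_core M hM h1 h2 _ _ (G.isSymm_adjMatrix (α := ℝ)) (H.isSymm_adjMatrix (α := ℝ)) ?_
      (fun g g' h h' h0 => (hr g g' h h' h0).1)
    intro g g' h h' h0
    simp only [SimpleGraph.adjMatrix_apply, (hr g g' h h' h0).2]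
  · refine charpoly_core M hM h1 h2 _ _ (Gᶜ.isSymm_adjMatrix (α := ℝ)) (Hᶜ.isSymm_adjMatrix (α := ℝ)) ?_
      (fun g g' h h' h0 => (hr g g' h h' h0).1)
    intro g g' h h' h0
    simp only [SimpleGraph.adjMatrix_apply, SimpleGraph.compl_adj, ne_eq, (hr g g' h h' h0).1,
      (hr g g' h h' h0).2]
end

section
/- If finite simple graphs G and H satisfy G ≅_{S+} H, then the combinatorial Laplacian matrices of G and H have the same characteristic polynomial, and the Laplacian matrices of their complement graphs also have the same characteristic polynomial. -/
open Matrix BigOperators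

section Helpers

/-- The all-ones matrix. -/
def allOnes (α : Type*) : Matrix α α ℝ := Matrix.of fun _ _ => 1

lemma allOnes_apply {α : Type*} (i j : α) : allOnes α i j = 1 := rfl


/-- The completely positive map with Kraus operators `B k`. -/
def krausMap {α β κ : Type*} [Fintype α] [Fintype κ]
    (B : κ → Matrix α β ℝ) (X : Matrix α α ℝ) : Matrix β β ℝ :=
  ∑ k, (B k)ᵀ * X * B k

lemma krausMap_apply {α β κ : Type*} [Fintype α] [Fintype κ]
    (B : κ → Matrix α β ℝ) (X : Matrix α α ℝ) (h h' : β) :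
    krausMap B X h h' = ∑ g, ∑ g', (∑ k, B k g h * B k g' h') * X g g' := by
  simp only [krausMap, Matrix.sum_apply, Matrix.mul_apply, Matrix.transpose_apply,
    Finset.sum_mul]
  rw [Finset.sum_comm, Finset.sum_comm (s := (Finset.univ : Finset α))
    (t := (Finset.univ : Finset α))]
  refine Finset.sum_congr rfl fun g' _ => ?_
  rw [Finset.sum_comm]
  refine Finset.sum_congr rfl fun g _ => ?_
  refine Finset.sum_congr rfl fun k _ => ?_
  ring

lemma krausMap_sub {α β κ : Type*} [Fintype α] [Fintype κ]
    (B : κ → Matrix α β ℝ) (X Y : Matrix α α ℝ) :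
    krausMap B (X - Y) = krausMap B X - krausMap B Y := by
  simp [krausMap, Matrix.mul_sub, Matrix.sub_mul]

/-- Schur multipliers are carried through the map. -/
lemma krausMap_schur {α β κ : Type*} [Fintype α] [Fintype κ]
    (B : κ → Matrix α β ℝ) (P X : Matrix α α ℝ) (Q : Matrix β β ℝ)
    (hs : ∀ g g' h h', P g g' ≠ Q h h' → ∑ k, B k g h * B k g' h' = 0) (h h' : β) :
    krausMap B (P ⊙ X) h h' = Q h h' * krausMap B X h h' := by
  rw [krausMap_apply, krausMap_apply, Finset.mul_sum]
  refine Finset.sum_congr rfl fun g _ => ?_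
  rw [Finset.mul_sum]
  refine Finset.sum_congr rfl fun g' _ => ?_
  by_cases e : P g g' = Q h h'
  · rw [hadamard_apply, e]; ring
  · rw [hs g g' h h' e]; ring

lemma kraus_intertwine {α β κ : Type*} [Fintype α] [Fintype β] [Fintype κ]
    [DecidableEq α] [DecidableEq β]
    (B : κ → Matrix α β ℝ)
    (h1 : krausMap B 1 = 1) (h2 : krausMap (fun k => (B k)ᵀ) 1 = 1)
    (X : Matrix α α ℝ) (Y : Matrix β β ℝ) (hX : Xᵀ = X) (hY : Yᵀ = Y)
    (hXY : krausMap B X = Y) (hYX : krausMap (fun k => (B k)ᵀ) Y = X) (k : κ) :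
    X * B k = B k * Y := by
  have t1 : ∑ k, trace ((B k)ᵀ * X * B k * Y) = trace (Y * Y) := by
    have : trace (Y * Y) = trace (krausMap B X * Y) := by rw [hXY]
    rw [this, krausMap, Finset.sum_mul, trace_sum]
  have t2 : ∑ k, trace ((B k)ᵀ * X * B k * Y) = trace (X * X) := by
    have : trace (X * X) = trace (krausMap (fun k => (B k)ᵀ) Y * X) := by rw [hYX]
    rw [this, krausMap, Finset.sum_mul, trace_sum]
    refine Finset.sum_congr rfl fun k _ => ?_
    rw [transpose_transpose, trace_mul_comm (B k * Y * (B k)ᵀ), ← Matrix.mul_assoc,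
      ← Matrix.mul_assoc, trace_mul_comm (X * B k * Y), ← Matrix.mul_assoc, ← Matrix.mul_assoc]
  have t3 : ∑ k, trace ((B k)ᵀ * X * X * B k) = trace (X * X) := by
    have : trace (X * X) = trace (krausMap (fun k => (B k)ᵀ) 1 * (X * X)) := by rw [h2, one_mul]
    rw [this, krausMap, Finset.sum_mul, trace_sum]
    refine Finset.sum_congr rfl fun k _ => ?_
    rw [transpose_transpose, trace_mul_comm _ (B k), Matrix.mul_one]
    simp only [Matrix.mul_assoc]
  have t4 : ∑ k, trace (Y * (B k)ᵀ * B k * Y) = trace (Y * Y) := by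
    have : trace (Y * Y) = trace (Y * krausMap B 1 * Y) := by rw [h1, mul_one]
    rw [this, krausMap, Finset.mul_sum, Finset.sum_mul, trace_sum]
    refine Finset.sum_congr rfl fun k _ => ?_
    rw [Matrix.mul_one]
    simp only [Matrix.mul_assoc]
  have key : ∑ k, trace ((X * B k - B k * Y)ᴴ * (X * B k - B k * Y)) = 0 := by
    have : ∀ k, trace ((X * B k - B k * Y)ᴴ * (X * B k - B k * Y)) =
        trace ((B k)ᵀ * X * X * B k) - trace ((B k)ᵀ * X * B k * Y)
        - trace ((B k)ᵀ * X * B k * Y) + trace (Y * (B k)ᵀ * B k * Y) := by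
      intro k
      have e : trace (Y * (B k)ᵀ * X * B k) = trace ((B k)ᵀ * X * B k * Y) := by
        rw [trace_mul_comm _ Y]; simp only [Matrix.mul_assoc]
      rw [conjTranspose_eq_transpose_of_trivial, transpose_sub, transpose_mul, transpose_mul,
        hX, hY, Matrix.mul_sub, Matrix.sub_mul, Matrix.sub_mul]
      simp only [trace_sub, ← Matrix.mul_assoc]
      rw [e]; ring
    simp only [this, Finset.sum_add_distrib, Finset.sum_sub_distrib]
    rw [t3, t4]
    linarith
  have nn : ∀ k ∈ Finset.univ, 0 ≤ trace ((X * B k - B k * Y)ᴴ * (X * B k - B k * Y)) :=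
    fun k _ => (posSemidef_conjTranspose_mul_self _).trace_nonneg
  have := (Finset.sum_eq_zero_iff_of_nonneg nn).1 key k (Finset.mem_univ k)
  exact sub_eq_zero.1 (trace_conjTranspose_mul_self_eq_zero_iff.1 this)

lemma kraus_trace_aeval {α β κ : Type*} [Fintype α] [Fintype β] [Fintype κ]
    [DecidableEq α] [DecidableEq β]
    (B : κ → Matrix α β ℝ)
    (h1 : krausMap B 1 = 1) (h2 : krausMap (fun k => (B k)ᵀ) 1 = 1)
    (X : Matrix α α ℝ) (Y : Matrix β β ℝ) (hXY : ∀ k, X * B k = B k * Y)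
    (p : Polynomial ℝ) :
    trace (Polynomial.aeval X p) = trace (Polynomial.aeval Y p) := by
  have hpow : ∀ (n : ℕ) k, X ^ n * B k = B k * Y ^ n := by
    intro n k
    induction n with
    | zero => simp
    | succ n ih => rw [pow_succ, pow_succ, Matrix.mul_assoc, hXY, ← Matrix.mul_assoc, ih,
        Matrix.mul_assoc]
  have hn : ∀ n : ℕ, trace (X ^ n) = trace (Y ^ n) := by
    intro n
    have a : trace (X ^ n) = trace (X ^ n * krausMap (fun k => (B k)ᵀ) 1) := by
      rw [h2, mul_one]
    have b : trace (Y ^ n) = trace (krausMap B 1 * Y ^ n) := by rw [h1, one_mul]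
    rw [a, b, krausMap, krausMap, Finset.sum_mul, Finset.mul_sum, trace_sum, trace_sum]
    refine Finset.sum_congr rfl fun k _ => ?_
    rw [transpose_transpose, Matrix.mul_one, Matrix.mul_one, ← Matrix.mul_assoc, hpow,
      trace_mul_comm, Matrix.mul_assoc]
  rw [Polynomial.aeval_eq_sum_range, Polynomial.aeval_eq_sum_range, trace_sum, trace_sum]
  simp [trace_smul, hn]

lemma trace_aeval_eq_sum {α : Type*} [Fintype α] [DecidableEq α]
    {X : Matrix α α ℝ} (hX : X.IsHermitian) (p : Polynomial ℝ) :
    trace (Polynomial.aeval X p) = ∑ i, p.eval (hX.eigenvalues i) := by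
  have hn : ∀ n : ℕ, trace (X ^ n) = ∑ i, hX.eigenvalues i ^ n := by
    intro n
    conv_lhs => rw [hX.spectral_theorem, ← map_pow, Unitary.conjStarAlgAut_apply, trace_mul_comm,
      ← mul_assoc]
    simp [diagonal_pow, trace_diagonal]
  rw [Polynomial.aeval_eq_sum_range, trace_sum]
  simp only [trace_smul, hn, Polynomial.eval_eq_sum_range, smul_eq_mul, Finset.mul_sum]
  rw [Finset.sum_comm]

lemma charpoly_eq_of_trace_aeval {α β : Type*} [Fintype α] [Fintype β]
    [DecidableEq α] [DecidableEq β]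
    {X : Matrix α α ℝ} {Y : Matrix β β ℝ} (hX : X.IsHermitian) (hY : Y.IsHermitian)
    (h : ∀ p : Polynomial ℝ, trace (Polynomial.aeval X p) = trace (Polynomial.aeval Y p)) :
    X.charpoly = Y.charpoly := by
  have hm : (Finset.univ.val.map hX.eigenvalues) = (Finset.univ.val.map hY.eigenvalues) := by
    ext t
    set S : Finset ℝ := insert t (Finset.univ.image hX.eigenvalues ∪
      Finset.univ.image hY.eigenvalues) with hS
    set p := Lagrange.interpolate S id (fun x => if t = x then (1 : ℝ) else 0) with hp
    have hpe : ∀ x ∈ S, p.eval x = if t = x then (1 : ℝ) else 0 := fun x hx =>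
      Lagrange.eval_interpolate_at_node (v := id) _ (Function.injective_id.injOn) hx
    have := h p
    rw [trace_aeval_eq_sum hX, trace_aeval_eq_sum hY,
      Finset.sum_congr rfl (fun i _ => hpe (hX.eigenvalues i) (by simp [hS])),
      Finset.sum_congr rfl (fun i _ => hpe (hY.eigenvalues i) (by simp [hS])),
      Finset.sum_boole, Finset.sum_boole] at this
    rw [Multiset.count_map, Multiset.count_map]
    exact_mod_cast this
  have e := congrArg (fun m : Multiset ℝ =>
    (m.map (fun x => Polynomial.X - Polynomial.C x)).prod) hm
  rw [hX.charpoly_eq, hY.charpoly_eq]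
  simp only [Multiset.map_map] at e
  exact e

/-- One-sided facts about the Kraus map of an isomorphism matrix. -/
lemma kraus_facts {α β κ : Type*} [Fintype α] [Fintype β] [Fintype κ]
    [DecidableEq α] [DecidableEq β]
    (G : SimpleGraph α) (H : SimpleGraph β) [DecidableRel G.Adj] [DecidableRel H.Adj]
    (B : κ → Matrix α β ℝ)
    (hsum : ∀ h h', ∑ g, ∑ g', ∑ k, B k g h * B k g' h' = 1)
    (hsupp : ∀ g g' h h', ¬ relEq G H g g' h h' → ∑ k, B k g h * B k g' h' = 0) :
    krausMap B (allOnes α) = allOnes β ∧ krausMap B 1 = 1 ∧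
    krausMap B (G.adjMatrix ℝ) = H.adjMatrix ℝ ∧
    ((∀ k, allOnes α * B k = B k * allOnes β) →
      krausMap B (G.lapMatrix ℝ) = H.lapMatrix ℝ) := by
  have hadJ : ∀ P : Matrix α α ℝ, P ⊙ allOnes α = P := by
    intro P; ext i j; simp [allOnes_apply]
  have hJ : krausMap B (allOnes α) = allOnes β := by
    ext h h'
    rw [krausMap_apply]
    simpa [allOnes_apply] using hsum h h'
  have hone : ∀ g g' h h', (1 : Matrix α α ℝ) g g' ≠ (1 : Matrix β β ℝ) h h' →
      ∑ k, B k g h * B k g' h' = 0 := by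
    intro g g' h h' hne
    refine hsupp _ _ _ _ fun hr => hne ?_
    simp only [Matrix.one_apply, hr.1]
  have hadj : ∀ g g' h h', G.adjMatrix ℝ g g' ≠ H.adjMatrix ℝ h h' →
      ∑ k, B k g h * B k g' h' = 0 := by
    intro g g' h h' hne
    refine hsupp _ _ _ _ fun hr => hne ?_
    simp only [SimpleGraph.adjMatrix_apply, hr.2]
  have hA : krausMap B (G.adjMatrix ℝ) = H.adjMatrix ℝ := by
    ext h h'
    have := krausMap_schur B (G.adjMatrix ℝ) (allOnes α) _ hadj h h'
    rwa [hJ, allOnes_apply, mul_one, hadJ] at this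
  refine ⟨hJ, ?_, hA, fun hc => ?_⟩
  · ext h h'
    have := krausMap_schur B 1 (allOnes α) _ hone h h'
    rwa [hJ, allOnes_apply, mul_one, hadJ] at this
  · have hAJ : krausMap B (G.adjMatrix ℝ * allOnes α) =
        H.adjMatrix ℝ * allOnes β := by
      rw [← hA, krausMap, krausMap, Finset.sum_mul]
      refine Finset.sum_congr rfl fun k _ => ?_
      simp only [Matrix.mul_assoc, hc]
    have dG : G.degMatrix ℝ = (1 : Matrix α α ℝ) ⊙ (G.adjMatrix ℝ * allOnes α) := by
      ext g g'
      simp [SimpleGraph.degMatrix, Matrix.diagonal_apply, Matrix.one_apply, Matrix.mul_apply,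
        G.degree_eq_sum_if_adj (R := ℝ), SimpleGraph.adjMatrix_apply, allOnes_apply]
    have dH : H.degMatrix ℝ = (1 : Matrix β β ℝ) ⊙ (H.adjMatrix ℝ * allOnes β) := by
      ext g g'
      simp [SimpleGraph.degMatrix, Matrix.diagonal_apply, Matrix.one_apply, Matrix.mul_apply,
        H.degree_eq_sum_if_adj (R := ℝ), SimpleGraph.adjMatrix_apply, allOnes_apply]
    rw [SimpleGraph.lapMatrix, SimpleGraph.lapMatrix, krausMap_sub, hA, dG, dH]
    congr 1
    ext h h'
    rw [krausMap_schur B 1 _ _ hone, hAJ, hadamard_apply]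

lemma lap_charpoly_aux {α β : Type*}
    [Fintype α] [Fintype β] [DecidableEq α] [DecidableEq β]
    (G : SimpleGraph α) (H : SimpleGraph β)
    [DecidableRel G.Adj] [DecidableRel H.Adj]
    (M : Matrix (α × β) (α × β) ℝ) (hM : IsIsoMatrix G H M) (hP : M.PosSemidef) :
    (G.lapMatrix ℝ).charpoly = (H.lapMatrix ℝ).charpoly := by
  obtain ⟨m, v, hv⟩ := Matrix.posSemidef_iff_eq_sum_vecMulVec.1 hP
  obtain ⟨c1, c2, c3⟩ := hM
  let B : Fin m → Matrix α β ℝ := fun k g h => v k (g, h)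
  have hMB : ∀ g g' h h', M (g, h) (g', h') = ∑ k, B k g h * B k g' h' := by
    intro g g' h h'
    rw [hv, Matrix.sum_apply]
    simp [B, Matrix.vecMulVec_apply]
  simp only [hMB] at c1 c2 c3
  obtain ⟨a1, a2, -, a4⟩ := kraus_facts G H B c2 c3
  obtain ⟨b1, b2, -, b4⟩ := kraus_facts H G (fun k => (B k)ᵀ) c1
    (fun h h' g g' hr => c3 g g' h h' fun hr' => hr ⟨hr'.1.symm, hr'.2.symm⟩)
  have hJ := kraus_intertwine B a2 b2 (allOnes α) (allOnes β) rfl rfl a1 b1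
  have hL := kraus_intertwine B a2 b2 (G.lapMatrix ℝ) (H.lapMatrix ℝ)
    (G.isSymm_lapMatrix ℝ) (H.isSymm_lapMatrix ℝ) (a4 hJ) (b4 fun k => by
      have := congrArg transpose (hJ k)
      rw [transpose_mul, transpose_mul] at this
      exact this.symm)
  exact charpoly_eq_of_trace_aeval (G.isHermitian_lapMatrix ℝ) (H.isHermitian_lapMatrix ℝ)
    (kraus_trace_aeval B a2 b2 _ _ hL)

end Helpers

/-- If `G ≅_{S+} H`, then `G` and `H` have cospectral Laplacians, as do their
complements. -/
theorem laplacian_cospectral_of_sPlus_iso {α β : Type*}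
    [Fintype α] [Fintype β] [DecidableEq α] [DecidableEq β]
    (G : SimpleGraph α) (H : SimpleGraph β)
    [DecidableRel G.Adj] [DecidableRel H.Adj]
    (h : ∃ M, IsIsoMatrix G H M ∧ M.PosSemidef) :
    (G.lapMatrix ℝ).charpoly = (H.lapMatrix ℝ).charpoly ∧
    (Gᶜ.lapMatrix ℝ).charpoly = (Hᶜ.lapMatrix ℝ).charpoly := by
  obtain ⟨M, hM, hP⟩ := h
  refine ⟨lap_charpoly_aux G H M hM hP, lap_charpoly_aux Gᶜ Hᶜ M ⟨hM.1, hM.2.1, ?_⟩ hP⟩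
  intro g g' h h' hr
  refine hM.2.2 g g' h h' fun hr' => hr ⟨hr'.1, ?_⟩
  rw [SimpleGraph.compl_adj, SimpleGraph.compl_adj, hr'.2, Ne, Ne, hr'.1]
end

section
/- If finite simple graphs G and H satisfy G ≅_{S+} H, then G and H have the same number of connected components, and the complements of G and H also have the same number of connected components. -/
open Matrix BigOperators

open Classical in
theorem aux_const {α β E : Type*} [Fintype α] [Fintype β]
    [NormedAddCommGroup E] [InnerProductSpace ℝ E]
    (G : SimpleGraph α) (H : SimpleGraph β) (v : α → β → E) (b : E)
    (hb : ∀ h, ∑ g, v g h = b)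
    (hz : ∀ g g' h h', ¬ relEq G H g g' h h' → inner ℝ (v g h) (v g' h') = 0)
    (C : G.ConnectedComponent) (h h' : β) (hh : H.connectedComponentMk h = H.connectedComponentMk h') :
    ∑ g with G.connectedComponentMk g = C, v g h =
      ∑ g with G.connectedComponentMk g = C, v g h' := by
  have key : ∀ h h' : β, (h = h' ∨ H.Adj h h') →
      inner ℝ (∑ g with G.connectedComponentMk g = C, v g h) b =
      inner ℝ (∑ g with G.connectedComponentMk g = C, v g h)
        (∑ g with G.connectedComponentMk g = C, v g h') := by
    intro h h' hor
    rw [← hb h', ← Finset.sum_filter_add_sum_filter_not Finset.univ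
      (fun g => G.connectedComponentMk g = C) (fun g => v g h'), inner_add_right]
    suffices hs : inner ℝ (∑ g with G.connectedComponentMk g = C, v g h)
        (∑ g with ¬ G.connectedComponentMk g = C, v g h') = 0 by
      rw [hs, add_zero]
    rw [sum_inner]
    refine Finset.sum_eq_zero fun g hg => ?_
    rw [inner_sum]
    refine Finset.sum_eq_zero fun g' hg' => hz _ _ _ _ ?_
    simp only [Finset.mem_filter, Finset.mem_univ, true_and] at hg hg'
    rintro ⟨h1, h2⟩
    rcases hor with e | e
    · have := h1.2 e
      subst this
      exact hg' hg
    · have := h2.2 e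
      apply hg'
      rw [← hg]
      exact (SimpleGraph.ConnectedComponent.eq.2 this.reachable).symm
  have adj : ∀ h h' : β, H.Adj h h' → ∑ g with G.connectedComponentMk g = C, v g h =
      ∑ g with G.connectedComponentMk g = C, v g h' := by
    intro h h' ha
    have k1 := key h h (Or.inl rfl)
    have k2 := key h h' (Or.inr ha)
    have k3 := key h' h' (Or.inl rfl)
    have k4 := key h' h (Or.inr ha.symm)
    rw [← sub_eq_zero, ← inner_self_eq_zero (𝕜 := ℝ), inner_sub_left, inner_sub_right,
      inner_sub_right]
    linarith
  obtain ⟨p⟩ := SimpleGraph.ConnectedComponent.eq.1 hh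
  clear hh
  induction p with
  | nil => rfl
  | cons ha _ ih => exact (adj _ _ ha).trans ih

open Classical in
theorem aux_norm {α β E : Type*} [Fintype α] [Fintype β]
    [NormedAddCommGroup E] [InnerProductSpace ℝ E]
    (G : SimpleGraph α) (H : SimpleGraph β) (v : α → β → E) (b : E)
    (hb : ∀ h, ∑ g, v g h = b)
    (hz : ∀ g g' h h', ¬ relEq G H g g' h h' → inner ℝ (v g h) (v g' h') = 0)
    (C : G.ConnectedComponent) (D : H.ConnectedComponent) :
    let T := ∑ h with H.connectedComponentMk h = D, ∑ g with G.connectedComponentMk g = C, v g h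
    inner ℝ T T = ((Finset.univ.filter fun h => H.connectedComponentMk h = D).card : ℝ) *
      ∑ h with H.connectedComponentMk h = D, ∑ g with G.connectedComponentMk g = C,
        inner ℝ (v g h) (v g h) := by
  intro T
  obtain ⟨h0, hh0⟩ := D.exists_rep
  have c : ∀ h ∈ Finset.univ.filter (fun h => H.connectedComponentMk h = D),
      ∑ g with G.connectedComponentMk g = C, v g h =
      ∑ g with G.connectedComponentMk g = C, v g h0 := by
    intro h hh
    apply aux_const G H v b hb hz
    simp only [Finset.mem_filter, Finset.mem_univ, true_and] at hh
    rw [hh]; exact hh0.symm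
  have n : ∀ h, ∑ g with G.connectedComponentMk g = C, inner ℝ (v g h) (v g h) =
      inner ℝ (∑ g with G.connectedComponentMk g = C, v g h)
        (∑ g with G.connectedComponentMk g = C, v g h) := by
    intro h
    rw [sum_inner]
    refine Finset.sum_congr rfl fun g hg => ?_
    rw [inner_sum, Finset.sum_eq_single_of_mem g hg]
    intro g' _ hne
    exact hz _ _ _ _ fun hr => hne (hr.1.2 rfl).symm
  have hT : T = ((Finset.univ.filter fun h => H.connectedComponentMk h = D).card : ℝ) •
      ∑ g with G.connectedComponentMk g = C, v g h0 := by
    simp only [T]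
    rw [Finset.sum_congr rfl c, Finset.sum_const, Nat.cast_smul_eq_nsmul]
  rw [Finset.sum_congr rfl (fun h hh => (n h).trans (by rw [c h hh])), hT, Finset.sum_const,
    inner_smul_left, inner_smul_right, nsmul_eq_mul]
  simp

theorem aux_sum {α β E : Type*} [Fintype α] [Fintype β]
    [NormedAddCommGroup E] [InnerProductSpace ℝ E] (v : α → β → E)
    (h1 : ∀ h h', ∑ g, ∑ g', inner ℝ (v g h) (v g' h') = (1 : ℝ)) :
    ∃ b, ∀ h, ∑ g, v g h = b := by
  have e : ∀ h h', inner ℝ (∑ g, v g h) (∑ g, v g h') = (1 : ℝ) := by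
    intro h h'
    rw [sum_inner, ← h1 h h']
    simp only [inner_sum]
  rcases isEmpty_or_nonempty β with hβ | ⟨⟨h0⟩⟩
  · exact ⟨0, fun h => (hβ.false h).elim⟩
  · refine ⟨∑ g, v g h0, fun h => ?_⟩
    rw [← sub_eq_zero, ← inner_self_eq_zero (𝕜 := ℝ), inner_sub_left, inner_sub_right,
      inner_sub_right, e, e, e, e]
    norm_num

theorem aux_one {α β : Type*} [Fintype α] [Fintype β]
    (G : SimpleGraph α) (H : SimpleGraph β)
    (h : ∃ M, IsIsoMatrix G H M ∧ M.PosSemidef) :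
    Nat.card G.ConnectedComponent = Nat.card H.ConnectedComponent := by
  classical
  obtain ⟨M, ⟨hG, hH, hz⟩, hM⟩ := h
  obtain ⟨B, hB⟩ : ∃ B : Matrix (α × β) (α × β) ℝ, M = Bᴴ * B := by
    open scoped MatrixOrder in
    exact CStarAlgebra.nonneg_iff_eq_star_mul_self.1 hM.nonneg
  let v : α → β → EuclideanSpace ℝ (α × β) := fun g h => WithLp.toLp 2 fun i => B i (g, h)
  have hv : ∀ g h g' h', M (g, h) (g', h') = inner ℝ (v g h) (v g' h') := by
    intro g h g' h'
    rw [hB, Matrix.mul_apply, PiLp.inner_apply]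
    refine Finset.sum_congr rfl fun i _ => ?_
    simp [v, mul_comm]
  simp only [hv] at hG hH hz
  obtain ⟨b, hb⟩ := aux_sum v hH
  obtain ⟨a, ha⟩ := aux_sum (fun h g => v g h) hG
  have hz' : ∀ h h' g g', ¬ relEq H G h h' g g' → inner ℝ (v g h) (v g' h') = (0 : ℝ) :=
    fun h h' g g' hn => hz g g' h h' fun hr => hn ⟨hr.1.symm, hr.2.symm⟩
  let cC : G.ConnectedComponent → ℝ := fun C =>
    ((Finset.univ.filter fun g => G.connectedComponentMk g = C).card : ℝ)
  let cD : H.ConnectedComponent → ℝ := fun D =>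
    ((Finset.univ.filter fun h => H.connectedComponentMk h = D).card : ℝ)
  let q : G.ConnectedComponent → H.ConnectedComponent → ℝ := fun C D =>
    ∑ h with H.connectedComponentMk h = D, ∑ g with G.connectedComponentMk g = C,
        inner ℝ (v g h) (v g h)
  have hq : ∀ C D, cC C * q C D = cD D * q C D := by
    intro C D
    have e1 := aux_norm G H v b hb hz C D
    have e2 := aux_norm H G (fun h g => v g h) a ha hz' D C
    simp only at e1 e2
    rw [Finset.sum_comm, e1] at e2
    rw [Finset.sum_comm (f := fun g h => inner ℝ (v g h) (v g h))] at e2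
    exact e2.symm
  have cCpos : ∀ C, cC C ≠ 0 := by
    intro C
    obtain ⟨g, hg⟩ := C.exists_rep
    simp only [cC]
    exact Nat.cast_ne_zero.2 (Finset.card_ne_zero_of_mem (a := g) (Finset.mem_filter.2 ⟨Finset.mem_univ _, hg⟩))
  have cDpos : ∀ D, cD D ≠ 0 := by
    intro C
    obtain ⟨g, hg⟩ := C.exists_rep
    simp only [cD]
    exact Nat.cast_ne_zero.2 (Finset.card_ne_zero_of_mem (a := g) (Finset.mem_filter.2 ⟨Finset.mem_univ _, hg⟩))
  have p1 : ∀ h, ∑ g, inner ℝ (v g h) (v g h) = (1 : ℝ) := by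
    intro h
    rw [← hH h h]
    refine Finset.sum_congr rfl fun g _ => ?_
    rw [Finset.sum_eq_single_of_mem g (Finset.mem_univ _)]
    intro g' _ hne
    exact hz _ _ _ _ fun hr => hne (hr.1.2 rfl).symm
  have p2 : ∀ g, ∑ h, inner ℝ (v g h) (v g h) = (1 : ℝ) := by
    intro g
    rw [← hG g g]
    refine Finset.sum_congr rfl fun h _ => ?_
    rw [Finset.sum_eq_single_of_mem h (Finset.mem_univ _)]
    intro h' _ hne
    exact hz _ _ _ _ fun hr => hne (hr.1.1 rfl).symm
  have s1 : ∀ D, ∑ C, q C D = cD D := by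
    intro D
    simp only [q]
    rw [Finset.sum_comm]
    have f : ∀ h, ∑ C, ∑ g with G.connectedComponentMk g = C, inner ℝ (v g h) (v g h) = (1 : ℝ) := by
      intro h
      rw [← p1 h]
      convert Finset.sum_fiberwise Finset.univ G.connectedComponentMk
        (fun g => inner ℝ (v g h) (v g h))
    simp only [f]
    simp [cD]
  have s2 : ∀ C, ∑ D, q C D = cC C := by
    intro C
    simp only [q]
    have f : ∀ F : β → ℝ, ∑ D, ∑ h with H.connectedComponentMk h = D, F h = ∑ h, F h := by
      intro F
      convert Finset.sum_fiberwise Finset.univ H.connectedComponentMk F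
    rw [f, Finset.sum_comm]
    simp only [p2]
    simp [cC]
  have t1 : ∑ D, ∑ C, q C D / cD D = (Fintype.card H.ConnectedComponent : ℝ) := by
    simp only [← Finset.sum_div, s1, div_self (cDpos _)]
    simp
  have t2 : ∑ C, ∑ D, q C D / cC C = (Fintype.card G.ConnectedComponent : ℝ) := by
    simp only [← Finset.sum_div, s2, div_self (cCpos _)]
    simp
  rw [Nat.card_eq_fintype_card, Nat.card_eq_fintype_card]
  have : (Fintype.card G.ConnectedComponent : ℝ) = Fintype.card H.ConnectedComponent := by
    rw [← t1, ← t2, Finset.sum_comm]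
    refine Finset.sum_congr rfl fun D _ => Finset.sum_congr rfl fun C _ => ?_
    rw [div_eq_div_iff (cCpos C) (cDpos D)]
    linarith [hq C D]
  exact_mod_cast this

/-- If `G ≅_{S+} H`, then `G` and `H` have the same number of connected components,
as do their complements. -/
theorem connectedComponents_of_sPlus_iso {α β : Type*}
    [Fintype α] [Fintype β]
    (G : SimpleGraph α) (H : SimpleGraph β)
    (h : ∃ M, IsIsoMatrix G H M ∧ M.PosSemidef) :
    Nat.card G.ConnectedComponent = Nat.card H.ConnectedComponent ∧
    Nat.card Gᶜ.ConnectedComponent = Nat.card Hᶜ.ConnectedComponent := by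
  refine ⟨aux_one G H h, aux_one Gᶜ Hᶜ ?_⟩
  obtain ⟨M, ⟨hG, hH, hz⟩, hM⟩ := h
  refine ⟨M, ⟨hG, hH, fun g g' h h' hn => hz g g' h h' fun hr => hn ⟨hr.1, ?_⟩⟩, hM⟩
  rw [SimpleGraph.compl_adj, SimpleGraph.compl_adj, ne_eq, ne_eq, hr.1, hr.2]
end

section
/- Let D ∈ ℝ^{d×d} be a doubly stochastic matrix (all entries nonnegative, all row sums and all column sums equal to 1), and let u, v ∈ ℝ^d be vectors with the same multiset of entries (there is a permutation σ of {1,…,d} with v_i = u_{σ(i)} for all i). Then the following are equivalent: (1) Du = v; (2) D_{ij} = 0 whenever v_i ≠ u_j; (3) D(u ∘ w) = v ∘ (Dw) for all w ∈ ℝ^d; (4) Dᵀ(v ∘ w) = u ∘ (Dᵀw) for all w ∈ ℝ^d; (5) Dᵀv = u. -/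
open Matrix BigOperators

theorem ds_key {d : ℕ} (D : Matrix (Fin d) (Fin d) ℝ)
    (hnonneg : ∀ i j, 0 ≤ D i j)
    (hrow : ∀ i, ∑ j, D i j = 1)
    (hcol : ∀ j, ∑ i, D i j = 1)
    (u v : Fin d → ℝ)
    (hsq : ∑ i, v i ^ 2 = ∑ i, u i ^ 2) (h : D.mulVec u = v) :
    ∀ i j, v i ≠ u j → D i j = 0 := by
  have h0 : ∑ i, ∑ j, D i j * (v i - u j) ^ 2 = 0 := by
    have e : ∀ i j, D i j * (v i - u j) ^ 2
        = v i ^ 2 * D i j - 2 * v i * (D i j * u j) + D i j * u j ^ 2 := by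
      intro i j; ring
    have hv : ∀ i, ∑ j, D i j * u j = v i := fun i => congrFun h i
    have h3 : ∑ i, ∑ j, D i j * u j ^ 2 = ∑ j, u j ^ 2 := by
      rw [Finset.sum_comm]
      simp only [← Finset.sum_mul, hcol, one_mul]
    simp only [e, Finset.sum_add_distrib, Finset.sum_sub_distrib, ← Finset.mul_sum, hrow, hv]
    rw [h3, ← hsq, ← Finset.sum_sub_distrib, ← Finset.sum_add_distrib]
    apply Finset.sum_eq_zero
    intro i _
    ring
  have hn : ∀ i j, 0 ≤ D i j * (v i - u j) ^ 2 := fun i j =>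
    mul_nonneg (hnonneg i j) (sq_nonneg _)
  intro i j hij
  have h1 := (Finset.sum_eq_zero_iff_of_nonneg
    (fun i _ => Finset.sum_nonneg (fun j _ => hn i j))).1 h0 i (Finset.mem_univ _)
  have h2 := (Finset.sum_eq_zero_iff_of_nonneg (fun j _ => hn i j)).1 h1 j (Finset.mem_univ _)
  rcases mul_eq_zero.1 h2 with h | h
  · exact h
  · exact absurd (sub_eq_zero.1 (pow_eq_zero_iff two_ne_zero |>.1 h)) hij

theorem ds_23 {d : ℕ} (D : Matrix (Fin d) (Fin d) ℝ) (u v : Fin d → ℝ)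
    (h : ∀ i j, v i ≠ u j → D i j = 0) (w : Fin d → ℝ) :
    D.mulVec (u * w) = v * D.mulVec w := by
  ext i
  simp only [Matrix.mulVec, dotProduct, Pi.mul_apply, Finset.mul_sum]
  apply Finset.sum_congr rfl
  intro j _
  by_cases e : v i = u j
  · rw [e]; ring
  · rw [h i j e]; ring

theorem ds_31 {d : ℕ} (D : Matrix (Fin d) (Fin d) ℝ)
    (hrow : ∀ i, ∑ j, D i j = 1) (u v : Fin d → ℝ)
    (h : ∀ w : Fin d → ℝ, D.mulVec (u * w) = v * D.mulVec w) : D.mulVec u = v := by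
  have h1 := h 1
  have h2 : D.mulVec 1 = 1 := by
    ext i
    simp [Matrix.mulVec, dotProduct, hrow]
  rwa [h2, mul_one, mul_one] at h1

/-- For a doubly stochastic matrix `D` and vectors `u`, `v` with the same multiset of
entries, the following are equivalent: (1) `Du = v`; (2) `D_{ij} = 0` whenever
`v_i ≠ u_j`; (3) `D(u ∘ w) = v ∘ (Dw)` for all `w`; (4) `Dᵀ(v ∘ w) = u ∘ (Dᵀw)` for
all `w`; (5) `Dᵀv = u`.  Here `∘` is the entrywise product of vectors. -/
theorem doublyStochastic_mulVec_tfae {d : ℕ} (D : Matrix (Fin d) (Fin d) ℝ)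
    (hnonneg : ∀ i j, 0 ≤ D i j)
    (hrow : ∀ i, ∑ j, D i j = 1)
    (hcol : ∀ j, ∑ i, D i j = 1)
    (u v : Fin d → ℝ)
    (hperm : ∃ σ : Equiv.Perm (Fin d), ∀ i, v i = u (σ i)) :
    (D.mulVec u = v ↔ (∀ i j, v i ≠ u j → D i j = 0)) ∧
    ((∀ i j, v i ≠ u j → D i j = 0) ↔
      (∀ w : Fin d → ℝ, D.mulVec (u * w) = v * D.mulVec w)) ∧
    ((∀ w : Fin d → ℝ, D.mulVec (u * w) = v * D.mulVec w) ↔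
      (∀ w : Fin d → ℝ, Dᵀ.mulVec (v * w) = u * Dᵀ.mulVec w)) ∧
    ((∀ w : Fin d → ℝ, Dᵀ.mulVec (v * w) = u * Dᵀ.mulVec w) ↔
      Dᵀ.mulVec v = u) := by
  have hsq : ∑ i, v i ^ 2 = ∑ i, u i ^ 2 := by
    obtain ⟨σ, hσ⟩ := hperm
    simp only [hσ]
    exact Equiv.sum_comp σ (fun i => u i ^ 2)
  have h12 := ds_key D hnonneg hrow hcol u v hsq
  have h23 := ds_23 D u v
  have h31 := ds_31 D hrow u v
  have h52 : Dᵀ.mulVec v = u → ∀ i j, v i ≠ u j → D i j = 0 := fun h i j hij =>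
    ds_key Dᵀ (fun i j => hnonneg j i) hcol hrow v u hsq.symm h j i hij.symm
  have h24 : (∀ i j, v i ≠ u j → D i j = 0) →
      ∀ w : Fin d → ℝ, Dᵀ.mulVec (v * w) = u * Dᵀ.mulVec w := fun h =>
    ds_23 Dᵀ v u (fun i j hij => h j i hij.symm)
  have h45 := ds_31 Dᵀ hcol v u
  exact ⟨⟨h12, fun h => h31 (h23 h)⟩, ⟨h23, fun h => h12 (h31 h)⟩,
    ⟨fun h => h24 (h12 (h31 h)), fun h => h23 (h52 (h45 h))⟩, ⟨h45, fun h => h24 (h52 h)⟩⟩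
end
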